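/- arXiv:1107.4120 — 4 statements merged into one kernel-verified Lean document; each statement's English description precedes it below -/
import Mathlib

section
/- Let 𝐯 = (13,v₂) with v₂ ≥ 1 and 𝐤 = (3,1). Then D(𝐯,𝐤,2) = 4·v₂ if 1 ≤ v₂ ≤ 6; 25 if v₂ = 7; and 26 if v₂ ≥ 8. -/
/-!
A packing with `𝐯 = (13, n)`, `𝐤 = (3, 1)`, `t = 2`, `λ = 1` is the same thing as a set of triples on
13 points, no two sharing a pair of points, together with a colouring by `n` colours in which triples
of equal colour are disjoint (`ColPacking`).

*Upper bounds.* Each triple uses 3 of the 78 pairs, so there are at most 26 triples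
(`ColPacking.card_le`); each colour class has at most `⌊13 / 3⌋ = 4` triples
(`ColPacking.card_le_four_mul`). *Lower bounds.* Two explicit systems: six disjoint-triple classes of
size 4 (`sixClasses`), and a Steiner triple system of order 13 coloured with eight colours, the last
colour being used only once (`eightClasses`).

*Seven colours do not suffice for 26 triples* (`ColPacking.card_ne`). Such a packing is a Steiner
triple system on 13 points with a 7-colouring (`Sys`). Since `26 > 7 * 3`, some colour `c₀` occurs on
four triples, which after relabelling are `{0,1,2}, {3,4,5}, {6,7,8}, {9,10,11}`. The six triples
through the remaining point 12 give a perfect matching of the twelve other points joining different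
groups. Up to permutations preserving the groups there are three such matchings
(`Refuted.step` and its applications). Two of them extend to no Steiner triple system containing the
four groups (`refuted_matchingB`, `refuted_matchingC`). For the third (`refuted_matchingA`), the six
triples through 12 have distinct colours other than `c₀`, so all colours of the ten known triples can
be normalised, and each extension to a Steiner triple system is found to have no 7-colouring
extending these.

The extension problems are exact cover problems, solved by a backtracking search `refute` on
finite sets encoded as the bits of natural numbers. Its soundness is `refute_sound`; it is evaluated by
kernel reduction. For this reason the search is written with recursors and continuations, and
`forceK` makes the kernel evaluate natural numbers to literals at once.
-/

open Finset

/-- A `t`-`(𝐯,𝐤,λ)` generalized packing: a multiset of blocks `B` with `|B i| = k i`,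
such that for every `(𝐤,t)`-admissible tuple `t'` and every tuple of sets `T` with
`|T i| = t' i`, at most `lam` blocks contain `T` componentwise. -/
def IsGenPacking {ι : Type} [Fintype ι] [DecidableEq ι] (t lam : ℕ) (v k : ι → ℕ)
    (P : Multiset (∀ i : ι, Finset (Fin (v i)))) : Prop :=
  (∀ B ∈ P, ∀ i, (B i).card = k i) ∧
  ∀ t' : ι → ℕ, (∀ i, t' i ≤ k i) → (∑ i, t' i) = t →
    ∀ T : ∀ i : ι, Finset (Fin (v i)), (∀ i, (T i).card = t' i) →
      (P.filter (fun B => ∀ i, T i ⊆ B i)).card ≤ lam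

/-- The generalized packing number `D_λ(𝐯,𝐤,t)`. -/
noncomputable def genPackingNumber (ι : Type) [Fintype ι] [DecidableEq ι] (t lam : ℕ) (v k : ι → ℕ) : ℕ :=
  sSup {N | ∃ P, IsGenPacking t lam v k P ∧ Multiset.card P = N}

/-- The ordinary packing number `D_λ(v,k,t)`, as the case `m = 1`. -/
noncomputable def ordPackingNumber (v k t lam : ℕ) : ℕ :=
  genPackingNumber (Fin 1) t lam (fun _ => v) (fun _ => k)

/-! ### A backtracking search for exact covers -/

/-- `if b then x else y` as a bare recursor, for fast kernel evaluation. -/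
noncomputable def ifK {α : Type} (b : Bool) (x y : α) : α :=
  Bool.rec (motive := fun _ => α) y x b

/-- Disjointness of two sets given by their bits. -/
noncomputable def disj (a b : ℕ) : Bool := Nat.beq (Nat.land a b) (nat_lit 0)

/-- `k n`, where the case distinction makes the kernel evaluate `n` to a literal first. -/
noncomputable def forceK {α : Type} (n : ℕ) (k : ℕ → α) : α :=
  Nat.rec (motive := fun _ => α) (k (nat_lit 0)) (fun m _ => k (Nat.succ m)) n

/-- `k l.reverse`, with all members of the list evaluated to literals first. -/
noncomputable def forceListK (l : List ℕ) (k : List ℕ → Bool) : Bool :=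
  List.rec (motive := fun _ => List ℕ → Bool) k
    (fun a _ ih acc => forceK a fun a => ih (a :: acc)) l []

/-- Pass to `k` the members of `l` disjoint from `r`, in reverse order. -/
noncomputable def filterK (r : ℕ) (l : List ℕ) (k : List ℕ → Bool) : Bool :=
  List.rec (motive := fun _ => List ℕ → Bool) k
    (fun a _ ih acc => ifK (disj a r) (ih (a :: acc)) (ih acc)) l []

/-- Pass to `k` the sets of elements that lie in at least one, two, three members of `l`. -/
noncomputable def levelsK (l : List ℕ) (k : ℕ → ℕ → ℕ → Bool) : Bool :=
  List.rec (motive := fun _ => ℕ → ℕ → ℕ → Bool) k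
    (fun a _ ih o t h =>
      forceK (Nat.lor h (Nat.land t a)) fun h' =>
      forceK (Nat.lor t (Nat.land o a)) fun t' =>
      forceK (Nat.lor o a) fun o' => ih o' t' h') l (nat_lit 0) (nat_lit 0) (nat_lit 0)

/-- Apply `k` to the first member of `l` disjoint from `m`; the value is `d` if there is none. -/
noncomputable def pickK (m : ℕ) (l : List ℕ) (d : Bool) (k : ℕ → Bool) : Bool :=
  List.rec (motive := fun _ => Bool) d (fun a _ ih => ifK (disj a m) (k a) ih) l

/-- Check `k a` for all `a` in `l` that meet `e`. -/
noncomputable def branchK (e : ℕ) (l : List ℕ) (k : ℕ → Bool) : Bool :=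
  List.rec (motive := fun _ => Bool) true
    (fun a _ ih => ifK (disj a e) ih (ifK (k a) ih false)) l

/-- Search for a choice of rows from the list `c` that are pairwise disjoint within `mask` and meet every
target in the list `es`; `ch` holds the rows chosen so far, and `n` bounds the depth. The value `true`
means that every such choice is ruled out by `leaf`, which is called once all targets are met and
returns `true` to rule a choice out. The target to branch on is one met by no row if there is one,
else by a single row, else by two rows, and so on; soundness does not depend on which target is
taken. -/
noncomputable def refute (mask : ℕ) (leaf : List ℕ → Bool) (n : ℕ) :
    List ℕ → List ℕ → List ℕ → Bool :=
  Nat.rec (motive := fun _ => List ℕ → List ℕ → List ℕ → Bool) (fun _ _ _ => false)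
    (fun _ ih es c ch => levelsK c fun o t h =>
      let k := fun e => branchK e c fun r => forceK (Nat.land r mask) fun s =>
        filterK s es fun es' => filterK s c fun c' => ih es' c' (r :: ch)
      pickK o es (pickK t es (pickK h es (pickK (nat_lit 0) es (leaf ch) k) k) k) k) n

/-- `refute` started after choosing the rows in `fix`. -/
noncomputable def refuteFrom (mask : ℕ) (leaf : List ℕ → Bool) (n : ℕ) (fix : List ℕ) :
    List ℕ → List ℕ → Bool :=
  List.rec (motive := fun _ => List ℕ → List ℕ → Bool) (fun es c => refute mask leaf n es c [])
    (fun r _ ih es c => forceK (Nat.land r mask) fun s =>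
      filterK s es fun es' => filterK s c fun c' => ih es' c') fix

theorem disj_iff (a b : ℕ) : disj a b = true ↔ a &&& b = 0 := by
  unfold disj; exact Nat.beq_eq ▸ Iff.rfl

theorem ifK_eq {α : Type} (b : Bool) (x y : α) : ifK b x y = if b then x else y := by
  cases b <;> rfl

theorem forceK_eq {α : Type} (n : ℕ) (k : ℕ → α) : forceK n k = k n := by
  cases n <;> rfl

theorem forceListK_eq (l : List ℕ) (k : List ℕ → Bool) : forceListK l k = k l.reverse := by
  have key : ∀ (l acc : List ℕ), (List.rec (motive := fun _ => List ℕ → Bool) k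
    (fun a _ ih acc => forceK a fun a => ih (a :: acc)) l acc : Bool) = k (l.reverse ++ acc) := by
    intro l
    induction l with
    | nil => intro acc; rfl
    | cons a l ih => intro acc; exact (forceK_eq a _).trans ((ih _).trans (by simp))
  exact (key l []).trans (by simp)

theorem filterK_eq (r : ℕ) (l : List ℕ) (k : List ℕ → Bool) :
    filterK r l k = k (l.filter (disj · r)).reverse := by
  have key : ∀ (l acc : List ℕ), (List.rec (motive := fun _ => List ℕ → Bool) k
    (fun a _ ih acc => ifK (disj a r) (ih (a :: acc)) (ih acc)) l acc : Bool) =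
      k ((l.filter (disj · r)).reverse ++ acc) := by
    intro l
    induction l with
    | nil => intro acc; rfl
    | cons a l ih =>
      intro acc
      refine (ifK_eq (disj a r) _ _).trans ?_
      split
      · exact (ih _).trans (by simp [*])
      · exact (ih _).trans (by simp [*])
  exact (key l []).trans (by simp)

/-- Only that `levelsK` passes some values on matters for soundness: they guide the branching. -/
theorem levelsK_spec (l : List ℕ) (k : ℕ → ℕ → ℕ → Bool) (h : levelsK l k = true) :
    ∃ o t u, k o t u = true := by
  have key : ∀ (l : List ℕ) (o t u : ℕ), (List.rec (motive := fun _ => ℕ → ℕ → ℕ → Bool) k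
    (fun a _ ih o t h =>
      forceK (Nat.lor h (Nat.land t a)) fun h' =>
      forceK (Nat.lor t (Nat.land o a)) fun t' =>
      forceK (Nat.lor o a) fun o' => ih o' t' h') l o t u : Bool) = true →
      ∃ o t u, k o t u = true := by
    intro l
    induction l with
    | nil => intro o t u h; exact ⟨o, t, u, h⟩
    | cons a l ih =>
      intro o t u h
      replace h := (forceK_eq (Nat.lor u (Nat.land t a)) _).symm.trans h
      replace h := (forceK_eq (Nat.lor t (Nat.land o a)) _).symm.trans h
      replace h := (forceK_eq (Nat.lor o a) _).symm.trans h
      exact ih _ _ _ h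
  exact key l _ _ _ h

theorem pickK_spec {m : ℕ} {l : List ℕ} {d : Bool} {k : ℕ → Bool} (h : pickK m l d k = true) :
    d = true ∨ ∃ e ∈ l, k e = true := by
  unfold pickK at h
  induction l with
  | nil => exact .inl h
  | cons a l ih =>
    replace h := (ifK_eq (disj a m) _ _).symm.trans h
    split at h
    · exact .inr ⟨a, by simp, h⟩
    · rcases ih h with h | ⟨e, he, hk⟩
      · exact .inl h
      · exact .inr ⟨e, by simp [he], hk⟩

theorem branchK_spec {e : ℕ} {l : List ℕ} {k : ℕ → Bool} (h : branchK e l k = true) :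
    ∀ r ∈ l, r &&& e ≠ 0 → k r = true := by
  unfold branchK at h
  induction l with
  | nil => simp
  | cons a l ih =>
    replace h := (ifK_eq (disj a e) _ _).symm.trans h
    intro r hr hre
    by_cases ha : a &&& e = 0
    · rw [if_pos ((disj_iff a e).2 ha)] at h
      rcases List.mem_cons.1 hr with rfl | hr
      · exact absurd ha hre
      · exact ih h r hr hre
    · rw [if_neg (mt (disj_iff a e).1 ha)] at h
      replace h := (ifK_eq (k a) _ _).symm.trans h
      split at h
      · rcases List.mem_cons.1 hr with rfl | hr
        · assumption
        · exact ih h r hr hre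
      · cases h

/-- Every target in `es` is met by a member of `c` that belongs to the solution `Sol`. -/
def Covers (Sol : ℕ → Prop) (es c : List ℕ) : Prop :=
  ∀ e ∈ es, ∃ r ∈ c, Sol r ∧ r &&& e ≠ 0

/-- `Covers` survives the choice of a row `r` of the solution: the targets and rows meeting `r` within the
mask are dropped, because two rows of the solution meet there only if they are equal. -/
theorem Covers.fix {Sol : ℕ → Prop} {mask : ℕ}
    (hS : ∀ r s, Sol r → Sol s → r = s ∨ s &&& (r &&& mask) = 0)
    {es c : List ℕ} (hes : ∀ e ∈ es, e &&& mask = e) (h : Covers Sol es c) {r : ℕ} (hr : Sol r) :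
    Covers Sol (es.filter (disj · (r &&& mask))).reverse (c.filter (disj · (r &&& mask))).reverse ∧
    ∀ e ∈ (es.filter (disj · (r &&& mask))).reverse, e &&& mask = e := by
  refine ⟨fun e he => ?_, fun e he => hes e (by simp at he; exact he.1)⟩
  simp only [List.mem_reverse, List.mem_filter, disj_iff] at he
  obtain ⟨s, hs, hSs, hse⟩ := h e he.1
  refine ⟨s, ?_, hSs, hse⟩
  simp only [List.mem_reverse, List.mem_filter, disj_iff]
  refine ⟨hs, ?_⟩
  rcases hS r s hr hSs with rfl | h0
  · exfalso
    apply hse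
    have h1 := he.2
    rw [← hes e he.1]
    rw [← h1]
    ac_rfl
  · exact h0

theorem refute_sound {Sol : ℕ → Prop} {mask : ℕ} {leaf : List ℕ → Bool}
    (hS : ∀ r s, Sol r → Sol s → r = s ∨ s &&& (r &&& mask) = 0)
    (hleaf : ∀ ch : List ℕ, (∀ r ∈ ch, Sol r) → leaf ch = true → False) (n : ℕ) :
    ∀ es c ch : List ℕ, (∀ e ∈ es, e &&& mask = e) → Covers Sol es c → (∀ r ∈ ch, Sol r) →
      refute mask leaf n es c ch = true → False := by
  induction n with
  | zero => intro es c ch _ _ _ h; cases h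
  | succ n ih =>
    intro es c ch hes hc hch h
    obtain ⟨o, t, u, h⟩ := levelsK_spec _ _ h
    have hk : leaf ch = true ∨ ∃ e ∈ es, (branchK e c fun r => forceK (Nat.land r mask) fun s =>
        filterK s es fun es' => filterK s c fun c' =>
          refute mask leaf n es' c' (r :: ch)) = true := by
      rcases pickK_spec h with h | h
      · rcases pickK_spec h with h | h
        · rcases pickK_spec h with h | h
          · rcases pickK_spec h with h | h
            · exact .inl h
            · exact .inr h
          · exact .inr h
        · exact .inr h
      · exact .inr h
    rcases hk with h | ⟨e, he, h⟩
    · exact hleaf ch hch h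
    · obtain ⟨r, hr, hSr, hre⟩ := hc e he
      have h1 := branchK_spec h r hr hre
      simp only [forceK_eq, filterK_eq] at h1
      obtain ⟨h2, h3⟩ := hc.fix hS hes hSr
      exact ih _ _ _ h3 h2 (by simpa using ⟨hSr, hch⟩) h1

theorem refuteFrom_sound {Sol : ℕ → Prop} {mask : ℕ} {leaf : List ℕ → Bool}
    (hS : ∀ r s, Sol r → Sol s → r = s ∨ s &&& (r &&& mask) = 0)
    (hleaf : ∀ ch : List ℕ, (∀ r ∈ ch, Sol r) → leaf ch = true → False) (n : ℕ) (fix : List ℕ)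
    (hfix : ∀ r ∈ fix, Sol r) :
    ∀ es c : List ℕ, (∀ e ∈ es, e &&& mask = e) → Covers Sol es c →
      refuteFrom mask leaf n fix es c = true → False := by
  induction fix with
  | nil => intro es c hes hc h; exact refute_sound hS hleaf n es c [] hes hc (by simp) h
  | cons r fix ih =>
    intro es c hes hc h
    have h1 : refuteFrom mask leaf n fix (es.filter (disj · (r &&& mask))).reverse
        (c.filter (disj · (r &&& mask))).reverse = true := by
      rw [← h]
      simp only [refuteFrom, forceK_eq, filterK_eq]
      rfl
    obtain ⟨h2, h3⟩ := hc.fix hS hes (hfix r (by simp))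
    exact ih (fun s hs => hfix s (by simp [hs])) _ _ h3 h2 h1

/-! ### Triples and coloured triples as bit sets -/

/-- The pairs contained in `{x, y, z}`, where `x < y < z` and the pair `{x, y}` is bit `13 * x + y`. -/
def pairBits (x y z : ℕ) : ℕ := 2 ^ (13 * x + y) ||| 2 ^ (13 * x + z) ||| 2 ^ (13 * y + z)

/-- The incidences of colour `c` with the points `x, y, z`; colour `c` and point `x` have bit
`169 + 13 * c + x`. -/
def pointBits (x y z c : ℕ) : ℕ :=
  2 ^ (169 + 13 * c + x) ||| 2 ^ (169 + 13 * c + y) ||| 2 ^ (169 + 13 * c + z)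

/-- The triple `{x, y, z}` of colour `c`: its pairs, and the incidences of its points with `c`. -/
def row (x y z c : ℕ) : ℕ := pairBits x y z ||| pointBits x y z c

/-- The bits that stand for pairs of points. -/
def pairMask : ℕ := 2 ^ 169 - 1
/-- All bits: pairs of points, and incidences of the colours `0, …, 6` with points. -/
def fullMask : ℕ := 2 ^ 260 - 1

/-- Turns the row of a triple of colour `0` into the row of that triple with colour `c`. -/
noncomputable def recolour (r c : ℕ) : ℕ :=
  Nat.lor (Nat.land r pairMask) (Nat.shiftLeft (Nat.shiftRight r 169) (Nat.add 169 (Nat.mul 13 c)))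

/-- The 78 pairs, as targets. -/
def pairList : List ℕ :=
  (List.range 13).flatMap fun y => (List.range y).map fun x => 2 ^ (13 * x + y)

/-- All triples, as rows of colour `0`. -/
def tripleList : List ℕ :=
  (List.range 13).flatMap fun z => (List.range z).flatMap fun y =>
    (List.range y).map fun x => row x y z 0

/-- All rows obtained from rows of colour `0` in `l` by choosing one of seven colours. -/
noncomputable def recolourings (l : List ℕ) : List ℕ :=
  l.flatMap fun r => [recolour r 0, recolour r 1, recolour r 2, recolour r 3, recolour r 4,
    recolour r 5, recolour r 6]

/-- Refutes a 7-colouring of the triples `ch` (given as rows of colour `0`) that is compatible with the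
coloured triples `fix`. -/
noncomputable def colourRefute (fix ch : List ℕ) : Bool :=
  forceListK (ch.map (Nat.land · pairMask)) fun es => forceListK (recolourings ch) fun c =>
    refuteFrom fullMask (fun _ => false) 20 fix es c

/-- Refutes Steiner triple systems containing the triples `fix` (given as rows of colour `0`). Since the
mask consists of the pairs only, the colour is disregarded; `leaf` is called on completed systems. -/
noncomputable def tripleRefute (leaf : List ℕ → Bool) (fix : List ℕ) : Bool :=
  forceListK pairList fun es => forceListK tripleList fun c =>
    refuteFrom pairMask leaf 30 fix es c

/-- A Steiner triple system on 13 points, with set of blocks `S`, and a proper 7-colouring `col` of its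
blocks: blocks of equal colour are equal or disjoint. -/
structure Sys (S : Finset (Fin 13) → Prop) (col : Finset (Fin 13) → Fin 7) : Prop where
  card_eq : ∀ B, S B → B.card = 3
  exists_block : ∀ x y : Fin 13, x ≠ y → ∃ B, S B ∧ x ∈ B ∧ y ∈ B
  eq_of_pair : ∀ B B', S B → S B' → ∀ x y, x ≠ y → x ∈ B → y ∈ B → x ∈ B' → y ∈ B' → B = B'
  eq_of_col : ∀ B B', S B → S B' → col B = col B' → ∀ x, x ∈ B → x ∈ B' → B = B'

theorem exists_sorted {B : Finset (Fin 13)} (h : B.card = 3) :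
    ∃ a b c : Fin 13, a < b ∧ b < c ∧ B = {a, b, c} := by
  refine ⟨B.orderEmbOfFin h 0, B.orderEmbOfFin h 1, B.orderEmbOfFin h 2, by simp, by simp, ?_⟩
  have h3 : Finset.univ.image (B.orderEmbOfFin h) = B := Finset.image_orderEmbOfFin_univ B h
  generalize B.orderEmbOfFin h = f at h3
  rw [← h3]
  ext a
  simp [Fin.exists_fin_succ, eq_comm]

theorem sorted_unique {x y z x' y' z' : Fin 13} (h1 : x < y) (h2 : y < z) (h1' : x' < y')
    (h2' : y' < z') (h : ({x, y, z} : Finset (Fin 13)) = {x', y', z'}) :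
    x = x' ∧ y = y' ∧ z = z' := by
  have a1 : x ∈ ({x', y', z'} : Finset (Fin 13)) := h ▸ by simp
  have a2 : y ∈ ({x', y', z'} : Finset (Fin 13)) := h ▸ by simp
  have a3 : z ∈ ({x', y', z'} : Finset (Fin 13)) := h ▸ by simp
  simp only [Finset.mem_insert, Finset.mem_singleton] at a1 a2 a3
  omega

theorem testBit_row (x y z c i : ℕ) : (row x y z c).testBit i = true ↔
    (i = 13 * x + y ∨ i = 13 * x + z ∨ i = 13 * y + z) ∨
    (i = 169 + 13 * c + x ∨ i = 169 + 13 * c + y ∨ i = 169 + 13 * c + z) := by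
  simp only [row, pairBits, pointBits, Nat.testBit_or, Nat.testBit_two_pow, Bool.or_eq_true,
    decide_eq_true_eq]
  omega

theorem testBit_pairMask (i : ℕ) : pairMask.testBit i = true ↔ i < 169 := by
  simp only [pairMask, Nat.testBit_two_pow_sub_one, decide_eq_true_eq]

theorem land_ne_zero_iff (a b : ℕ) :
    a &&& b ≠ 0 ↔ ∃ i, a.testBit i = true ∧ b.testBit i = true := by
  constructor
  · intro h
    obtain ⟨i, hi⟩ := Nat.exists_testBit_of_ne_zero h
    exact ⟨i, by simpa using hi⟩
  · rintro ⟨i, h1, h2⟩ h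
    have := congrArg (Nat.testBit · i) h
    simp [h1, h2] at this

theorem recolour_row {x y z c : ℕ} (hx : x < 13) (hy : y < 13) (hz : z < 13) :
    recolour (row x y z 0) c = row x y z c := by
  have e : recolour (row x y z 0) c =
    (row x y z 0 &&& pairMask) ||| ((row x y z 0 >>> 169) <<< (169 + 13 * c)) := rfl
  rw [e]
  apply Nat.eq_of_testBit_eq
  intro i
  rw [Bool.eq_iff_iff]
  simp only [Nat.testBit_or, Nat.testBit_and, Nat.testBit_shiftLeft, Nat.testBit_shiftRight,
    Bool.or_eq_true, Bool.and_eq_true, decide_eq_true_eq, testBit_row, testBit_pairMask]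
  omega

/-- The rows of the blocks of `S`, coloured by `κ`; with `κ = 0` the colouring is disregarded. -/
def Sol (S : Finset (Fin 13) → Prop) (κ : Finset (Fin 13) → ℕ) (r : ℕ) : Prop :=
  ∃ x y z : Fin 13, x < y ∧ y < z ∧ S {x, y, z} ∧ r = row x y z (κ {x, y, z})

/-- Blocks whose rows share a pair bit are equal. -/
theorem Sys.eq_of_pairBit {S col} (hS : Sys S col) {x y z x' y' z' : Fin 13} (h1 : x < y)
    (h2 : y < z) (h1' : x' < y') (h2' : y' < z') (h : S {x, y, z}) (h' : S {x', y', z'}) {i : ℕ}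
    (hi : i = 13 * x.val + y ∨ i = 13 * x.val + z ∨ i = 13 * y.val + z)
    (hi' : i = 13 * x'.val + y' ∨ i = 13 * x'.val + z' ∨ i = 13 * y'.val + z') :
    ({x, y, z} : Finset (Fin 13)) = {x', y', z'} := by
  have key : ∃ p q : Fin 13, p ≠ q ∧ (p = x ∨ p = y ∨ p = z) ∧ (q = x ∨ q = y ∨ q = z) ∧
      (p = x' ∨ p = y' ∨ p = z') ∧ (q = x' ∨ q = y' ∨ q = z') := by
    rcases hi with hi | hi | hi
    · exact ⟨x, y, by omega, by omega, by omega, by omega, by omega⟩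
    · exact ⟨x, z, by omega, by omega, by omega, by omega, by omega⟩
    · exact ⟨y, z, by omega, by omega, by omega, by omega, by omega⟩
  obtain ⟨p, q, hpq, a, b, c, d⟩ := key
  exact hS.eq_of_pair _ _ h h' p q hpq (by simpa using a) (by simpa using b) (by simpa using c)
    (by simpa using d)

theorem Sys.sol_zero {S col} (hS : Sys S col) (r s : ℕ) (hr : Sol S 0 r) (hs : Sol S 0 s) :
    r = s ∨ s &&& (r &&& pairMask) = 0 := by
  by_contra! hne
  obtain ⟨hrs, h0⟩ := hne
  obtain ⟨i, hi1, hi2⟩ := (land_ne_zero_iff _ _).1 h0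
  rw [Nat.testBit_and, Bool.and_eq_true, testBit_pairMask] at hi2
  obtain ⟨x, y, z, h1, h2, h, rfl⟩ := hr
  obtain ⟨x', y', z', h1', h2', h', rfl⟩ := hs
  rw [testBit_row] at hi1 hi2
  have := hS.eq_of_pairBit h1 h2 h1' h2' h h' (i := i) (by omega) (by omega)
  obtain ⟨rfl, rfl, rfl⟩ := sorted_unique h1 h2 h1' h2' this
  exact hrs rfl

theorem Sys.sol_col {S col} (hS : Sys S col) (r s : ℕ) (hr : Sol S (fun B => col B) r)
    (hs : Sol S (fun B => col B) s) : r = s ∨ s &&& (r &&& fullMask) = 0 := by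
  by_contra! hne
  obtain ⟨hrs, h0⟩ := hne
  obtain ⟨i, hi1, hi2⟩ := (land_ne_zero_iff _ _).1 h0
  rw [Nat.testBit_and, Bool.and_eq_true] at hi2
  replace hi2 := hi2.1
  obtain ⟨x, y, z, h1, h2, h, rfl⟩ := hr
  obtain ⟨x', y', z', h1', h2', h', rfl⟩ := hs
  rw [testBit_row] at hi1 hi2
  beta_reduce at hi1 hi2
  have : ({x, y, z} : Finset (Fin 13)) = {x', y', z'} := by
    rcases hi2 with hi2 | hi2
    · exact hS.eq_of_pairBit h1 h2 h1' h2' h h' hi2 (by omega)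
    · have hc : col {x, y, z} = col {x', y', z'} := by omega
      have key : ∃ p : Fin 13, (p = x ∨ p = y ∨ p = z) ∧ (p = x' ∨ p = y' ∨ p = z') := by
        rcases hi2 with hi | hi | hi
        · exact ⟨x, by omega, by omega⟩
        · exact ⟨y, by omega, by omega⟩
        · exact ⟨z, by omega, by omega⟩
      obtain ⟨p, a, b⟩ := key
      exact hS.eq_of_col _ _ h h' hc p (by simpa using a) (by simpa using b)
  obtain ⟨rfl, rfl, rfl⟩ := sorted_unique h1 h2 h1' h2' this
  exact hrs rfl

theorem mem_tripleList {x y z : ℕ} (h1 : x < y) (h2 : y < z) (h3 : z < 13) :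
    row x y z 0 ∈ tripleList := by
  simp only [tripleList, List.mem_flatMap, List.mem_map, List.mem_range]
  exact ⟨z, h3, y, h2, x, h1, rfl⟩

theorem mem_pairList {e : ℕ} (h : e ∈ pairList) :
    ∃ x y : Fin 13, x < y ∧ e = 2 ^ (13 * x.val + y) := by
  simp only [pairList, List.mem_flatMap, List.mem_map, List.mem_range] at h
  obtain ⟨y, hy, x, hx, rfl⟩ := h
  exact ⟨⟨x, by omega⟩, ⟨y, hy⟩, by simpa using hx, rfl⟩

theorem Sys.covers_triple {S col} (hS : Sys S col) :
    Covers (Sol S 0) pairList.reverse tripleList.reverse := by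
  intro e he
  obtain ⟨x, y, hxy, rfl⟩ := mem_pairList (List.mem_reverse.1 he)
  obtain ⟨B, hB, hx, hy⟩ := hS.exists_block x y hxy.ne
  obtain ⟨a, b, c, h1, h2, rfl⟩ := exists_sorted (hS.card_eq B hB)
  refine ⟨row a b c 0, List.mem_reverse.2 (mem_tripleList h1 h2 c.2),
    ⟨a, b, c, h1, h2, hB, rfl⟩, ?_⟩
  rw [land_ne_zero_iff]
  refine ⟨13 * x.val + y, ?_, by simp⟩
  rw [testBit_row]
  simp only [Finset.mem_insert, Finset.mem_singleton] at hx hy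
  left
  rcases hx with rfl | rfl | rfl <;> rcases hy with rfl | rfl | rfl <;> omega

theorem Sys.tripleRefute_sound {S col} (hS : Sys S col) {leaf : List ℕ → Bool}
    (hleaf : ∀ ch : List ℕ, (∀ r ∈ ch, Sol S 0 r) → leaf ch = true → False) {fix : List ℕ}
    (hfix : ∀ r ∈ fix, Sol S 0 r) (h : tripleRefute leaf fix = true) : False := by
  simp only [tripleRefute, forceListK_eq] at h
  refine refuteFrom_sound hS.sol_zero hleaf 30 fix hfix _ _ ?_ hS.covers_triple h
  intro e he
  obtain ⟨x, y, hxy, rfl⟩ := mem_pairList (List.mem_reverse.1 he)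
  apply Nat.eq_of_testBit_eq
  intro i
  rw [Bool.eq_iff_iff]
  simp only [Nat.testBit_and, Bool.and_eq_true, testBit_pairMask, Nat.testBit_two_pow,
    decide_eq_true_eq]
  omega

theorem Sys.colourRefute_sound {S col} (hS : Sys S col) {fix ch : List ℕ}
    (hfix : ∀ r ∈ fix, Sol S (fun B => col B) r) (hch : ∀ r ∈ ch, Sol S 0 r)
    (h : colourRefute fix ch = true) : False := by
  simp only [colourRefute, forceListK_eq] at h
  refine refuteFrom_sound hS.sol_col (by simp) 20 fix hfix _ _ ?_ ?_ h
  · intro e he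
    simp only [List.mem_reverse, List.mem_map] at he
    obtain ⟨r, -, rfl⟩ := he
    have : pairMask &&& fullMask = pairMask := by decide +kernel
    change (r &&& pairMask) &&& fullMask = r &&& pairMask
    rw [Nat.land_assoc, this]
  · intro e he
    simp only [List.mem_reverse, List.mem_map] at he
    obtain ⟨r, hr, rfl⟩ := he
    obtain ⟨x, y, z, h1, h2, hB, rfl⟩ := hch r hr
    refine ⟨row x y z (col {x, y, z}), ?_, ⟨x, y, z, h1, h2, hB, rfl⟩, ?_⟩
    · rw [List.mem_reverse, recolourings, List.mem_flatMap]
      refine ⟨_, hr, ?_⟩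
      simp only [Pi.zero_apply, recolour_row x.2 y.2 z.2]
      generalize col {x, y, z} = c
      fin_cases c <;> simp
    · change row x y z (col {x, y, z}) &&& (row x y z 0 &&& pairMask) ≠ 0
      rw [land_ne_zero_iff]
      refine ⟨13 * x.val + y, ?_, ?_⟩
      · rw [testBit_row]; simp
      · rw [Nat.testBit_and, Bool.and_eq_true, testBit_pairMask, testBit_row]; omega

/-! ### Reduction to three matchings -/

/-- A list of blocks; the flag says whether the block is required to have the distinguished colour. -/
abbrev PartialSys := List (Finset (Fin 13) × Bool)

/-- No 7-coloured Steiner triple system contains the blocks of `L` with all flagged ones of equal colour. -/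
def Refuted (L : PartialSys) : Prop :=
  ∀ S col, Sys S col → ∀ c₀, (∀ t ∈ L, S t.1 ∧ (t.2 = true → col t.1 = c₀)) → False

theorem Sys.relabel {S col} (hS : Sys S col) (p : Equiv.Perm (Fin 13)) :
    Sys (fun B => S (B.map p.toEmbedding)) (fun B => col (B.map p.toEmbedding)) where
  card_eq B hB := by simpa using hS.card_eq _ hB
  exists_block x y hxy := by
    obtain ⟨B, hB, hx, hy⟩ := hS.exists_block (p x) (p y) (by simpa using hxy)
    refine ⟨B.map p.symm.toEmbedding, ?_, ?_, ?_⟩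
    · convert hB
      ext a
      simp [Finset.mem_map_equiv]
    · simpa [Finset.mem_map_equiv] using hx
    · simpa [Finset.mem_map_equiv] using hy
  eq_of_pair B B' h h' x y hxy a b c d := Finset.map_injective p.toEmbedding
    (hS.eq_of_pair _ _ h h' (p x) (p y) (by simpa using hxy) (by simpa using a) (by simpa using b)
      (by simpa using c) (by simpa using d))
  eq_of_col B B' h h' hc x a b := Finset.map_injective p.toEmbedding
    (hS.eq_of_col _ _ h h' hc (p x) (by simpa using a) (by simpa using b))

theorem Sys.recolour {S col} (hS : Sys S col) (τ : Equiv.Perm (Fin 7)) :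
    Sys S (fun B => τ (col B)) where
  card_eq := hS.card_eq
  exists_block := hS.exists_block
  eq_of_pair := hS.eq_of_pair
  eq_of_col B B' h h' hc := hS.eq_of_col B B' h h' (by simpa using hc)

/-- Branching on the block `{x, y, z}` through `x` and `y`, with symmetry reduction: each choice of `z`
either conflicts with a block of `L`, or some already refuted `L'` is mapped into `L` together with the
new block by a permutation from the list `ps`. The conditions are Boolean list checks, so that deciding
them does not enumerate the finite types of all permutations or of all sets of points. -/
theorem Refuted.step {L : PartialSys} (x y : Fin 13) (hxy : x ≠ y) (Ls : List PartialSys)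
    (hLs : ∀ L' ∈ Ls, Refuted L') (ps : List (Fin 13 → Fin 13))
    (hps : ps.all fun π => Function.Injective π)
    (h : ∀ z : Fin 13, z = x ∨ z = y ∨
      (L.any fun t => 2 ≤ (t.1 ∩ {x, y, z}).card ∧ t.1 ≠ {x, y, z}) ∨
      Ls.any fun L' => ps.any fun π => L'.all fun t =>
        (t.1.image π, t.2) ∈ ({x, y, z}, false) :: L) :
    Refuted L := by
  simp only [List.all_eq_true, List.any_eq_true, decide_eq_true_eq] at hps h
  intro S col hS c₀ hL
  obtain ⟨B, hB, hxB, hyB⟩ := hS.exists_block x y hxy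
  obtain ⟨z, hzx, hzy, rfl⟩ : ∃ z, z ≠ x ∧ z ≠ y ∧ B = {x, y, z} := by
    have h3 := hS.card_eq B hB
    have h1 : ((B.erase x).erase y).card = 1 := by
      rw [Finset.card_erase_of_mem (by simp [hyB, hxy.symm]), Finset.card_erase_of_mem hxB, h3]
    obtain ⟨z, hz⟩ := Finset.card_eq_one.1 h1
    have hz' : z ∈ (B.erase x).erase y := by simp [hz]
    simp only [Finset.mem_erase] at hz'
    refine ⟨z, hz'.2.1, hz'.1, ?_⟩
    rw [← Finset.insert_erase hxB, ← Finset.insert_erase (s := B.erase x) (a := y)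
      (by simp [hyB, hxy.symm]), hz]
  rcases h z with h | h | ⟨t, ht, h2, hne⟩ | ⟨L', hL', π, hπ, hsub⟩
  · exact hzx h
  · exact hzy h
  · obtain ⟨p, hp, q, hq, hpq⟩ := Finset.one_lt_card.1 h2
    rw [Finset.mem_inter] at hp hq
    exact hne (hS.eq_of_pair _ _ (hL t ht).1 hB p q hpq hp.1 hq.1 hp.2 hq.2)
  · let p : Equiv.Perm (Fin 13) :=
      Equiv.ofBijective π (Finite.injective_iff_bijective.1 (hps π hπ))
    refine hLs L' hL' _ _ (hS.relabel p) c₀ fun t ht => ?_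
    have hmap : t.1.map p.toEmbedding = t.1.image π := by
      rw [Finset.map_eq_image]; rfl
    rw [hmap]
    rcases List.mem_cons.1 (hsub t ht) with h | h
    · rw [Prod.mk.injEq] at h
      rw [h.1, h.2]
      exact ⟨hB, by simp⟩
    · exact hL _ h

/-- The four disjoint triples of the distinguished colour. -/
def groups : PartialSys :=
  [({0, 1, 2}, true), ({3, 4, 5}, true), ({6, 7, 8}, true), ({9, 10, 11}, true)]

theorem sol_of {S : Finset (Fin 13) → Prop} {κ : Finset (Fin 13) → ℕ} {x y z : Fin 13}
    (h1 : x < y) (h2 : y < z) (hS : S {x, y, z}) {c : ℕ} (hc : κ {x, y, z} = c) :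
    Sol S κ (row x y z c) := ⟨x, y, z, h1, h2, hS, by rw [hc]⟩

/-- The rows of the four groups in colour `c`. -/
def groupRows (c : ℕ) : List ℕ := [row 0 1 2 c, row 3 4 5 c, row 6 7 8 c, row 9 10 11 c]

/-- The groups, and the blocks consisting of the point 12 and an edge of `m`. -/
def matchingSystem (m : List (Fin 13 × Fin 13)) : PartialSys :=
  m.map (fun e => ({e.1, e.2, 12}, false)) ++ groups

/-- The rows of `matchingSystem m` in colour `0`. -/
def matchingRows (m : List (Fin 13 × Fin 13)) : List ℕ :=
  groupRows 0 ++ m.map fun e => row e.1 e.2 12 0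

theorem sol_matchingRows {S : Finset (Fin 13) → Prop} {m : List (Fin 13 × Fin 13)}
    (hm : ∀ e ∈ m, e.1 < e.2 ∧ e.2 < 12) (hL : ∀ t ∈ matchingSystem m, S t.1) :
    ∀ r ∈ matchingRows m, Sol S 0 r := by
  have hg : ∀ t ∈ groups, S t.1 := fun t ht => hL t (by simp [matchingSystem, ht])
  intro r hr
  rcases List.mem_append.1 hr with h | h
  · simp only [groupRows, List.mem_cons, List.not_mem_nil, or_false] at h
    simp only [groups, List.mem_cons, List.not_mem_nil, or_false, forall_eq_or_imp,
      forall_eq] at hg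
    obtain ⟨g1, g2, g3, g4⟩ := hg
    rcases h with rfl | rfl | rfl | rfl
    · exact sol_of (by decide) (by decide) g1 rfl
    · exact sol_of (by decide) (by decide) g2 rfl
    · exact sol_of (by decide) (by decide) g3 rfl
    · exact sol_of (by decide) (by decide) g4 rfl
  · obtain ⟨e, he, rfl⟩ := List.mem_map.1 h
    refine sol_of (hm e he).1 (hm e he).2 (hL ({e.1, e.2, 12}, false) ?_) rfl
    simp only [matchingSystem, List.mem_append, List.mem_map]
    exact .inl ⟨e, he, rfl⟩

theorem refuted_of_tripleRefute {m : List (Fin 13 × Fin 13)}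
    (hm : ∀ e ∈ m, e.1 < e.2 ∧ e.2 < 12)
    (h : tripleRefute (fun _ => false) (matchingRows m) = true) : Refuted (matchingSystem m) :=
  fun _ _ hS _ hL => hS.tripleRefute_sound (by simp)
    (sol_matchingRows hm fun t ht => (hL t ht).1) h

theorem refuted_matchingB :
    Refuted (matchingSystem [(0, 3), (1, 4), (2, 6), (5, 9), (7, 10), (8, 11)]) :=
  refuted_of_tripleRefute (by simp) (by decide +kernel)

theorem refuted_matchingC :
    Refuted (matchingSystem [(0, 3), (1, 4), (2, 5), (6, 9), (7, 10), (8, 11)]) :=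
  refuted_of_tripleRefute (by simp) (by decide +kernel)

/-- The groups in colour 6, and the blocks through 12 of the matching `A` in the colours `0, …, 5`. -/
def colourRowsA : List ℕ :=
  groupRows 6 ++ [row 0 3 12 0, row 1 6 12 1, row 2 9 12 2, row 4 7 12 3, row 5 10 12 4,
    row 8 11 12 5]

theorem tripleRefute_matchingA : tripleRefute (colourRefute colourRowsA)
    (matchingRows [(0, 3), (1, 6), (2, 9), (4, 7), (5, 10), (8, 11)]) = true := by
  decide +kernel

theorem refuted_matchingA :
    Refuted (matchingSystem [(0, 3), (1, 6), (2, 9), (4, 7), (5, 10), (8, 11)]) := by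
  intro S col hS c₀ hL
  have hfix := sol_matchingRows (S := S) (by simp) fun t ht => (hL t ht).1
  simp only [matchingSystem, groups, List.map_cons, List.map_nil, List.cons_append, List.nil_append,
    List.mem_cons, List.not_mem_nil, or_false, forall_eq_or_imp, forall_eq, Bool.false_eq_true,
    false_imp_iff, and_true, true_imp_iff] at hL
  obtain ⟨b0, b1, b2, b3, b4, b5, ⟨g0, c0⟩, ⟨g1, c1⟩, ⟨g2, c2⟩, ⟨g3, c3⟩⟩ := hL
  have hblock : ∀ B ∈ ([{0, 3, 12}, {1, 6, 12}, {2, 9, 12}, {4, 7, 12}, {5, 10, 12},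
      {8, 11, 12}] : List (Finset (Fin 13))), S B ∧ 12 ∈ B := by
    simp only [List.mem_cons, List.not_mem_nil, or_false, forall_eq_or_imp, forall_eq]
    simp [*]
  have hne : ∀ B ∈ ([{0, 3, 12}, {1, 6, 12}, {2, 9, 12}, {4, 7, 12}, {5, 10, 12},
      {8, 11, 12}] : List (Finset (Fin 13))), ∀ B' ∈ ([{0, 3, 12}, {1, 6, 12}, {2, 9, 12},
      {4, 7, 12}, {5, 10, 12}, {8, 11, 12}] : List (Finset (Fin 13))),
      col B = col B' → B = B' := fun B hB B' hB' hc =>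
    hS.eq_of_col _ _ (hblock B hB).1 (hblock B' hB').1 hc 12 (hblock B hB).2 (hblock B' hB').2
  have hc₀ : ∀ B ∈ ([{0, 3, 12}, {1, 6, 12}, {2, 9, 12}, {4, 7, 12}, {5, 10, 12},
      {8, 11, 12}] : List (Finset (Fin 13))), col B ≠ c₀ := by
    intro B hB hc
    have h12 := (hblock B hB).2
    have : ∃ x ∈ B, x ∈ ({0, 1, 2} : Finset (Fin 13)) ∨ x ∈ ({3, 4, 5} : Finset (Fin 13)) ∨
        x ∈ ({6, 7, 8} : Finset (Fin 13)) := by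
      simp only [List.mem_cons, List.not_mem_nil, or_false] at hB
      rcases hB with rfl | rfl | rfl | rfl | rfl | rfl <;> decide
    obtain ⟨x, hx, h | h | h⟩ := this
    · rw [hS.eq_of_col _ _ (hblock B hB).1 g0 (hc.trans c0.symm) x hx h] at h12
      revert h12; decide
    · rw [hS.eq_of_col _ _ (hblock B hB).1 g1 (hc.trans c1.symm) x hx h] at h12
      revert h12; decide
    · rw [hS.eq_of_col _ _ (hblock B hB).1 g2 (hc.trans c2.symm) x hx h] at h12
      revert h12; decide
  -- The colours `cs 0, …, cs 6` are distinct, so they can be renamed to `0, …, 6`.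
  let cs : Fin 7 → Fin 7 := ![col {0, 3, 12}, col {1, 6, 12}, col {2, 9, 12}, col {4, 7, 12},
    col {5, 10, 12}, col {8, 11, 12}, c₀]
  have hcs : Function.Injective cs := by
    intro i j h
    fin_cases i <;> fin_cases j <;> first
      | rfl
      | exact absurd (hne _ (by simp) _ (by simp) h) (by decide)
      | exact absurd h (hc₀ _ (by simp))
      | exact absurd h.symm (hc₀ _ (by simp))
  let τ := (Equiv.ofBijective cs (Finite.injective_iff_bijective.1 hcs)).symm
  have hτ : ∀ i, τ (cs i) = i := fun i => Equiv.ofBijective_symm_apply_apply cs _ i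
  refine (hS.recolour τ).tripleRefute_sound (fun ch hch h => ?_) hfix tripleRefute_matchingA
  refine (hS.recolour τ).colourRefute_sound (fun r hr => ?_) hch h
  have hcol : ∀ B i, col B = cs i → ((τ (col B) : Fin 7) : ℕ) = i := fun B i h => by rw [h, hτ]
  simp only [colourRowsA, groupRows, List.cons_append, List.nil_append, List.mem_cons,
    List.not_mem_nil, or_false] at hr
  rcases hr with rfl | rfl | rfl | rfl | rfl | rfl | rfl | rfl | rfl | rfl
  · exact sol_of (by decide) (by decide) g0 (hcol _ 6 c0)
  · exact sol_of (by decide) (by decide) g1 (hcol _ 6 c1)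
  · exact sol_of (by decide) (by decide) g2 (hcol _ 6 c2)
  · exact sol_of (by decide) (by decide) g3 (hcol _ 6 c3)
  · exact sol_of (by decide) (by decide) b0 (hcol _ 0 rfl)
  · exact sol_of (by decide) (by decide) b1 (hcol _ 1 rfl)
  · exact sol_of (by decide) (by decide) b2 (hcol _ 2 rfl)
  · exact sol_of (by decide) (by decide) b3 (hcol _ 3 rfl)
  · exact sol_of (by decide) (by decide) b4 (hcol _ 4 rfl)
  · exact sol_of (by decide) (by decide) b5 (hcol _ 5 rfl)


/-! The following partial matchings are refuted by extending them at one further point. -/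

theorem refuted_0 : Refuted (matchingSystem [(0, 3), (1, 4), (2, 5), (6, 9), (7, 10)]) := by
  refine Refuted.step 12 8 (by decide)
    [matchingSystem [(0, 3), (1, 4), (2, 5), (6, 9), (7, 10), (8, 11)]]
    (by simp [refuted_matchingC])
    [![0, 1, 2, 3, 4, 5, 6, 7, 8, 9, 10, 11, 12]]
    (by decide +kernel) (by decide +kernel)

theorem refuted_1 : Refuted (matchingSystem [(0, 3), (1, 4), (2, 5), (6, 9)]) := by
  refine Refuted.step 12 7 (by decide)
    [matchingSystem [(0, 3), (1, 4), (2, 5), (6, 9), (7, 10)]]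
    (by simp [refuted_0])
    [![0, 1, 2, 3, 4, 5, 6, 7, 8, 9, 10, 11, 12],
      ![0, 1, 2, 3, 4, 5, 6, 7, 8, 9, 11, 10, 12]]
    (by decide +kernel) (by decide +kernel)

theorem refuted_2 : Refuted (matchingSystem [(0, 3), (1, 4), (2, 5)]) := by
  refine Refuted.step 12 6 (by decide)
    [matchingSystem [(0, 3), (1, 4), (2, 5), (6, 9)]]
    (by simp [refuted_1])
    [![0, 1, 2, 3, 4, 5, 6, 7, 8, 9, 10, 11, 12],
      ![0, 1, 2, 3, 4, 5, 6, 7, 8, 10, 9, 11, 12],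
      ![0, 1, 2, 3, 4, 5, 6, 7, 8, 11, 10, 9, 12]]
    (by decide +kernel) (by decide +kernel)

theorem refuted_3 : Refuted (matchingSystem [(0, 3), (1, 4), (2, 6), (5, 7), (8, 9)]) := by
  refine Refuted.step 12 10 (by decide)
    []
    (by simp [])
    []
    (by decide +kernel) (by decide +kernel)

theorem refuted_4 : Refuted (matchingSystem [(0, 3), (1, 4), (2, 6), (5, 7)]) := by
  refine Refuted.step 12 8 (by decide)
    [matchingSystem [(0, 3), (1, 4), (2, 6), (5, 7), (8, 9)]]
    (by simp [refuted_3])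
    [![0, 1, 2, 3, 4, 5, 6, 7, 8, 9, 10, 11, 12],
      ![0, 1, 2, 3, 4, 5, 6, 7, 8, 10, 9, 11, 12],
      ![0, 1, 2, 3, 4, 5, 6, 7, 8, 11, 10, 9, 12]]
    (by decide +kernel) (by decide +kernel)

theorem refuted_5 : Refuted (matchingSystem [(0, 3), (1, 4), (2, 6), (5, 9), (7, 10)]) := by
  refine Refuted.step 12 8 (by decide)
    [matchingSystem [(0, 3), (1, 4), (2, 6), (5, 9), (7, 10), (8, 11)]]
    (by simp [refuted_matchingB])
    [![0, 1, 2, 3, 4, 5, 6, 7, 8, 9, 10, 11, 12]]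
    (by decide +kernel) (by decide +kernel)

theorem refuted_6 : Refuted (matchingSystem [(0, 3), (1, 4), (2, 6), (5, 9)]) := by
  refine Refuted.step 12 7 (by decide)
    [matchingSystem [(0, 3), (1, 4), (2, 6), (5, 9), (7, 10)]]
    (by simp [refuted_5])
    [![0, 1, 2, 3, 4, 5, 6, 7, 8, 9, 10, 11, 12],
      ![0, 1, 2, 3, 4, 5, 6, 7, 8, 9, 11, 10, 12]]
    (by decide +kernel) (by decide +kernel)

theorem refuted_7 : Refuted (matchingSystem [(0, 3), (1, 4), (2, 6)]) := by
  refine Refuted.step 12 5 (by decide)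
    [matchingSystem [(0, 3), (1, 4), (2, 6), (5, 7)],
      matchingSystem [(0, 3), (1, 4), (2, 6), (5, 9)]]
    (by simp [refuted_4, refuted_6])
    [![0, 1, 2, 3, 4, 5, 6, 7, 8, 9, 10, 11, 12],
      ![0, 1, 2, 3, 4, 5, 6, 8, 7, 9, 10, 11, 12],
      ![0, 1, 2, 3, 4, 5, 6, 7, 8, 10, 9, 11, 12],
      ![0, 1, 2, 3, 4, 5, 6, 7, 8, 11, 10, 9, 12]]
    (by decide +kernel) (by decide +kernel)

theorem refuted_8 : Refuted (matchingSystem [(0, 3), (1, 4)]) := by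
  refine Refuted.step 12 2 (by decide)
    [matchingSystem [(0, 3), (1, 4), (2, 5)],
      matchingSystem [(0, 3), (1, 4), (2, 6)]]
    (by simp [refuted_2, refuted_7])
    [![0, 1, 2, 3, 4, 5, 6, 7, 8, 9, 10, 11, 12],
      ![0, 1, 2, 3, 4, 5, 7, 6, 8, 9, 10, 11, 12],
      ![0, 1, 2, 3, 4, 5, 8, 7, 6, 9, 10, 11, 12],
      ![0, 1, 2, 3, 4, 5, 9, 10, 11, 6, 7, 8, 12],
      ![0, 1, 2, 3, 4, 5, 10, 9, 11, 6, 7, 8, 12],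
      ![0, 1, 2, 3, 4, 5, 11, 9, 10, 6, 7, 8, 12]]
    (by decide +kernel) (by decide +kernel)

theorem refuted_9 : Refuted (matchingSystem [(0, 3), (1, 6), (2, 9), (4, 7), (5, 10)]) := by
  refine Refuted.step 12 8 (by decide)
    [matchingSystem [(0, 3), (1, 6), (2, 9), (4, 7), (5, 10), (8, 11)]]
    (by simp [refuted_matchingA])
    [![0, 1, 2, 3, 4, 5, 6, 7, 8, 9, 10, 11, 12]]
    (by decide +kernel) (by decide +kernel)

theorem refuted_10 : Refuted (matchingSystem [(0, 3), (1, 6), (2, 9), (4, 7)]) := by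
  refine Refuted.step 12 5 (by decide)
    [matchingSystem [(0, 3), (1, 4), (2, 6), (5, 7), (8, 9)],
      matchingSystem [(0, 3), (1, 6), (2, 9), (4, 7), (5, 10)]]
    (by simp [refuted_3, refuted_9])
    [![8, 7, 6, 5, 4, 3, 1, 0, 2, 9, 10, 11, 12],
      ![0, 1, 2, 3, 4, 5, 6, 7, 8, 9, 10, 11, 12],
      ![0, 1, 2, 3, 4, 5, 6, 7, 8, 9, 11, 10, 12]]
    (by decide +kernel) (by decide +kernel)

theorem refuted_11 : Refuted (matchingSystem [(0, 3), (1, 6), (2, 9)]) := by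
  refine Refuted.step 12 4 (by decide)
    [matchingSystem [(0, 3), (1, 6), (2, 9), (4, 7)]]
    (by simp [refuted_10])
    [![0, 1, 2, 3, 4, 5, 6, 7, 8, 9, 10, 11, 12],
      ![0, 1, 2, 3, 4, 5, 6, 8, 7, 9, 10, 11, 12],
      ![0, 2, 1, 3, 4, 5, 9, 10, 11, 6, 7, 8, 12],
      ![0, 2, 1, 3, 4, 5, 9, 11, 10, 6, 7, 8, 12]]
    (by decide +kernel) (by decide +kernel)

theorem refuted_12 : Refuted (matchingSystem [(0, 3), (1, 6)]) := by
  refine Refuted.step 12 2 (by decide)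
    [matchingSystem [(0, 3), (1, 4), (2, 6)],
      matchingSystem [(0, 3), (1, 6), (2, 9)]]
    (by simp [refuted_7, refuted_11])
    [![0, 2, 1, 3, 4, 5, 6, 7, 8, 9, 10, 11, 12],
      ![0, 2, 1, 3, 5, 4, 6, 7, 8, 9, 10, 11, 12],
      ![2, 1, 0, 7, 6, 8, 3, 4, 5, 9, 10, 11, 12],
      ![2, 1, 0, 8, 6, 7, 3, 4, 5, 9, 10, 11, 12],
      ![0, 1, 2, 3, 4, 5, 6, 7, 8, 9, 10, 11, 12],
      ![0, 1, 2, 3, 4, 5, 6, 7, 8, 10, 9, 11, 12],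
      ![0, 1, 2, 3, 4, 5, 6, 7, 8, 11, 10, 9, 12]]
    (by decide +kernel) (by decide +kernel)

theorem refuted_13 : Refuted (matchingSystem [(0, 3)]) := by
  refine Refuted.step 12 1 (by decide)
    [matchingSystem [(0, 3), (1, 4)],
      matchingSystem [(0, 3), (1, 6)]]
    (by simp [refuted_8, refuted_12])
    [![0, 1, 2, 3, 4, 5, 6, 7, 8, 9, 10, 11, 12],
      ![0, 1, 2, 3, 5, 4, 6, 7, 8, 9, 10, 11, 12],
      ![0, 1, 2, 3, 4, 5, 7, 6, 8, 9, 10, 11, 12],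
      ![0, 1, 2, 3, 4, 5, 8, 7, 6, 9, 10, 11, 12],
      ![0, 1, 2, 3, 4, 5, 9, 10, 11, 6, 7, 8, 12],
      ![0, 1, 2, 3, 4, 5, 10, 9, 11, 6, 7, 8, 12],
      ![0, 1, 2, 3, 4, 5, 11, 9, 10, 6, 7, 8, 12]]
    (by decide +kernel) (by decide +kernel)

theorem refuted_14 : Refuted (matchingSystem []) := by
  refine Refuted.step 12 0 (by decide)
    [matchingSystem [(0, 3)]]
    (by simp [refuted_13])
    [![0, 1, 2, 3, 4, 5, 6, 7, 8, 9, 10, 11, 12],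
      ![0, 1, 2, 4, 3, 5, 6, 7, 8, 9, 10, 11, 12],
      ![0, 1, 2, 5, 4, 3, 6, 7, 8, 9, 10, 11, 12],
      ![0, 1, 2, 6, 7, 8, 3, 4, 5, 9, 10, 11, 12],
      ![0, 1, 2, 7, 6, 8, 3, 4, 5, 9, 10, 11, 12],
      ![0, 1, 2, 8, 6, 7, 3, 4, 5, 9, 10, 11, 12],
      ![0, 1, 2, 9, 10, 11, 6, 7, 8, 3, 4, 5, 12],
      ![0, 1, 2, 10, 9, 11, 6, 7, 8, 3, 4, 5, 12],
      ![0, 1, 2, 11, 9, 10, 6, 7, 8, 3, 4, 5, 12]]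
    (by decide +kernel) (by decide +kernel)

/-! ### Packings as coloured sets of triples -/

/-- A set of coloured triples on 13 points in which two triples sharing a pair of points, or a colour and a
point, are equal. -/
structure ColPacking {γ : Type} (F : Finset (Finset (Fin 13) × γ)) : Prop where
  card_eq : ∀ b ∈ F, b.1.card = 3
  eq_of_pair : ∀ b ∈ F, ∀ b' ∈ F, ∀ x y, x ≠ y → x ∈ b.1 → y ∈ b.1 → x ∈ b'.1 → y ∈ b'.1 → b = b'
  eq_of_col : ∀ b ∈ F, ∀ b' ∈ F, b.2 = b'.2 → ∀ x, x ∈ b.1 → x ∈ b'.1 → b = b'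

/-- The block with components `A` and `C`. -/
def mkBlock {n : ℕ} (A : Finset (Fin 13)) (C : Finset (Fin n)) :
    ∀ i : Fin 2, Finset (Fin ((![13, n] : Fin 2 → ℕ) i))
  | 0 => A
  | 1 => C

theorem eq_of_card_filter_le_one {α : Type*} {P : Multiset α} {p : α → Prop} [DecidablePred p]
    (h : (P.filter p).card ≤ 1) {a b : α} (ha : a ∈ P) (hb : b ∈ P) (hpa : p a) (hpb : p b) :
    a = b := by
  have ha' : a ∈ P.filter p := Multiset.mem_filter.2 ⟨ha, hpa⟩
  have hb' : b ∈ P.filter p := Multiset.mem_filter.2 ⟨hb, hpb⟩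
  obtain ⟨c, hc⟩ := Multiset.card_eq_one.1
    (le_antisymm h (Multiset.card_pos_iff_exists_mem.2 ⟨a, ha'⟩))
  rw [hc, Multiset.mem_singleton] at ha' hb'
  rw [ha', hb']

theorem card_filter_map_le_one {α β : Type*} {F : Finset α} {f : α → β} {p : β → Prop}
    {_ : DecidablePred p} (h : ∀ a ∈ F, ∀ b ∈ F, p (f a) → p (f b) → a = b) :
    ((F.val.map f).filter p).card ≤ 1 := by
  rw [Multiset.filter_map, Multiset.card_map]
  refine (Finset.card_le_one (s := F.filter (p ∘ f))).2 fun a ha b hb => ?_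
  rw [Finset.mem_filter] at ha hb
  exact h a ha.1 b hb.1 ha.2 hb.2

theorem exists_colPacking {n : ℕ} (hn : 1 ≤ n)
    {P : Multiset (∀ i : Fin 2, Finset (Fin ((![13, n] : Fin 2 → ℕ) i)))}
    (hP : IsGenPacking 2 1 ![13, n] ![3, 1] P) :
    ∃ F : Finset (Finset (Fin 13) × Fin n), ColPacking F ∧ F.card = P.card := by
  obtain ⟨hk, ht⟩ := hP
  have h3 : ∀ B ∈ P, (show Finset (Fin 13) from B 0).card = 3 := fun B hB => hk B hB 0
  have h1 : ∀ B ∈ P, ∃ c : Fin n, (show Finset (Fin n) from B 1) = {c} :=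
    fun B hB => Finset.card_eq_one.1 (hk B hB 1)
  have hpair : ∀ T : Finset (Fin 13), T.card = 2 →
      (P.filter fun B => ∀ i, mkBlock T (∅ : Finset (Fin n)) i ⊆ B i).card ≤ 1 := fun T hT => by
    convert ht ![2, 0] (by intro i; fin_cases i <;> simp) (by simp) (mkBlock T ∅)
      (by intro i; fin_cases i; exacts [hT, rfl])
  have hcol : ∀ (x : Fin 13) (c : Fin n),
      (P.filter fun B => ∀ i, mkBlock {x} {c} i ⊆ B i).card ≤ 1 := fun x c => by
    convert ht ![1, 1] (by intro i; fin_cases i <;> simp) (by simp) (mkBlock {x} {c})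
      (by intro i; fin_cases i <;> rfl)
  have hnodup : P.Nodup := by
    classical
    rw [Multiset.nodup_iff_count_le_one]
    intro B
    by_cases hB : B ∈ P
    · obtain ⟨T, hT, hT2⟩ := Finset.exists_subset_card_eq (s := (show Finset (Fin 13) from B 0))
        (n := 2) (by rw [h3 B hB]; norm_num)
      refine le_trans ?_ (hpair T hT2)
      rw [← Multiset.count_filter_of_pos (p := fun B => ∀ i, mkBlock T (∅ : Finset (Fin n)) i ⊆ B i)]
      · exact Multiset.count_le_card _ _
      · intro i; fin_cases i
        · exact hT
        · exact Finset.empty_subset _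
    · rw [Multiset.count_eq_zero_of_notMem hB]; norm_num
  have : Nonempty (Fin n) := ⟨⟨0, hn⟩⟩
  choose! f hf using h1
  let g : (∀ i : Fin 2, Finset (Fin ((![13, n] : Fin 2 → ℕ) i))) → Finset (Fin 13) × Fin n :=
    fun B => (B 0, f B)
  have hg : ∀ B ∈ P, ∀ B' ∈ P, g B = g B' → B = B' := by
    intro B hB B' hB' h
    have e0 := congrArg Prod.fst h
    have e1 := congrArg Prod.snd h
    funext i
    fin_cases i
    · exact e0
    · exact (hf B hB).trans ((congrArg _ e1).trans (hf B' hB').symm)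
  classical
  refine ⟨P.toFinset.image g, ⟨?_, ?_, ?_⟩, ?_⟩
  · intro b hb
    obtain ⟨B, hB, rfl⟩ := Finset.mem_image.1 hb
    exact h3 B (Multiset.mem_toFinset.1 hB)
  · intro b hb b' hb' x y hxy a1 a2 a3 a4
    obtain ⟨B, hB, rfl⟩ := Finset.mem_image.1 hb
    obtain ⟨B', hB', rfl⟩ := Finset.mem_image.1 hb'
    refine congrArg g (eq_of_card_filter_le_one (hpair {x, y} (Finset.card_pair hxy))
      (Multiset.mem_toFinset.1 hB) (Multiset.mem_toFinset.1 hB') ?_ ?_)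
    · intro i; fin_cases i
      · exact Finset.insert_subset a1 (Finset.singleton_subset_iff.2 a2)
      · exact Finset.empty_subset _
    · intro i; fin_cases i
      · exact Finset.insert_subset a3 (Finset.singleton_subset_iff.2 a4)
      · exact Finset.empty_subset _
  · intro b hb b' hb' hc x a1 a2
    obtain ⟨B, hB, rfl⟩ := Finset.mem_image.1 hb
    obtain ⟨B', hB', rfl⟩ := Finset.mem_image.1 hb'
    rw [Multiset.mem_toFinset] at hB hB'
    refine congrArg g (eq_of_card_filter_le_one (hcol x (f B)) hB hB' ?_ ?_)
    · intro i; fin_cases i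
      · exact Finset.singleton_subset_iff.2 a1
      · exact (hf B hB).symm.subset
    · intro i; fin_cases i
      · exact Finset.singleton_subset_iff.2 a2
      · exact ((congrArg _ hc).trans (hf B' hB').symm).subset
  · rw [Finset.card_image_of_injOn, Multiset.toFinset_card_of_nodup hnodup]
    intro B hB B' hB' h
    exact hg B (by simpa using hB) B' (by simpa using hB') h

theorem ColPacking.exists_packing {n : ℕ} {F : Finset (Finset (Fin 13) × Fin n)}
    (hF : ColPacking F) : ∃ P, IsGenPacking 2 1 ![13, n] ![3, 1] P ∧ Multiset.card P = F.card := by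
  refine ⟨F.val.map fun b => mkBlock b.1 {b.2}, ⟨?_, ?_⟩, by simp⟩
  · intro B hB i
    obtain ⟨b, hb, rfl⟩ := Multiset.mem_map.1 hB
    fin_cases i
    · exact hF.card_eq b hb
    · rfl
  · intro t' hle hsum T hT
    refine card_filter_map_le_one fun b hb b' hb' hbT hbT' => ?_
    have hl1 : t' 1 ≤ 1 := hle 1
    rw [Fin.sum_univ_two] at hsum
    have s0 : (show Finset (Fin 13) from T 0) ⊆ b.1 := hbT 0
    have s0' : (show Finset (Fin 13) from T 0) ⊆ b'.1 := hbT' 0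
    have s1 : (show Finset (Fin n) from T 1) ⊆ {b.2} := hbT 1
    have s1' : (show Finset (Fin n) from T 1) ⊆ {b'.2} := hbT' 1
    have c0 : (show Finset (Fin 13) from T 0).card = t' 0 := hT 0
    have c1 : (show Finset (Fin n) from T 1).card = t' 1 := hT 1
    rcases Nat.le_one_iff_eq_zero_or_eq_one.1 hl1 with h | h
    · obtain ⟨x, y, hxy, e⟩ := Finset.card_eq_two.1 (c0.trans (by omega))
      rw [e] at s0 s0'
      exact hF.eq_of_pair b hb b' hb' x y hxy (s0 (by simp)) (s0 (by simp)) (s0' (by simp))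
        (s0' (by simp))
    · obtain ⟨x, e⟩ := Finset.card_eq_one.1 (c0.trans (by omega : t' 0 = 1))
      obtain ⟨c, e1⟩ := Finset.card_eq_one.1 (c1.trans h)
      rw [e] at s0 s0'
      rw [e1] at s1 s1'
      have hc : c = b.2 := by simpa using s1
      have hc' : c = b'.2 := by simpa using s1'
      exact hF.eq_of_col b hb b' hb' (hc.symm.trans hc') x (s0 (by simp)) (s0' (by simp))

/-! ### Upper bounds -/

theorem ColPacking.card_biUnion_pairs {γ : Type} {F : Finset (Finset (Fin 13) × γ)}
    (hF : ColPacking F) : (F.biUnion fun b => b.1.powersetCard 2).card = F.card * 3 := by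
  rw [Finset.card_biUnion, Finset.sum_const_nat (m := 3)]
  · intro b hb
    rw [Finset.card_powersetCard, hF.card_eq b hb]
    rfl
  · intro b hb b' hb' hne
    rw [Function.onFun, Finset.disjoint_left]
    intro e he he'
    rw [Finset.mem_powersetCard] at he he'
    obtain ⟨x, y, hxy, rfl⟩ := Finset.card_eq_two.1 he.2
    exact hne (hF.eq_of_pair b hb b' hb' x y hxy (he.1 (by simp)) (he.1 (by simp))
      (he'.1 (by simp)) (he'.1 (by simp)))

theorem card_pairs : ((Finset.univ : Finset (Fin 13)).powersetCard 2).card = 78 := by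
  rw [Finset.card_powersetCard, Finset.card_fin]
  rfl

theorem ColPacking.card_le {γ : Type} {F : Finset (Finset (Fin 13) × γ)}
    (hF : ColPacking F) : F.card ≤ 26 := by
  have h : (F.biUnion fun b => b.1.powersetCard 2).card ≤ 78 := by
    rw [← card_pairs]
    refine Finset.card_le_card (Finset.biUnion_subset.2 fun b _ => ?_)
    exact Finset.powersetCard_mono (Finset.subset_univ _)
  rw [hF.card_biUnion_pairs] at h
  omega

theorem ColPacking.card_le_four_mul {n : ℕ} {F : Finset (Finset (Fin 13) × Fin n)}
    (hF : ColPacking F) : F.card ≤ 4 * n := by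
  have key : ∀ c ∈ (Finset.univ : Finset (Fin n)), (F.filter fun b => b.2 = c).card ≤ 4 := by
    intro c _
    have h : ((F.filter fun b => b.2 = c).biUnion fun b => b.1).card ≤ 13 :=
      card_finset_fin_le _
    rw [Finset.card_biUnion, Finset.sum_const_nat (m := 3)] at h
    · omega
    · intro b hb
      exact hF.card_eq b (Finset.mem_filter.1 hb).1
    · intro b hb b' hb' hne
      have hb := Finset.mem_filter.1 hb
      have hb' := Finset.mem_filter.1 hb'
      exact Finset.disjoint_left.2 fun x hx hx' => hne
        (hF.eq_of_col b hb.1 b' hb'.1 (hb.2.trans hb'.2.symm) x hx hx')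
  have := Finset.card_le_mul_card_image_of_maps_to (f := fun b : Finset (Fin 13) × Fin n => b.2)
    (s := F) (fun _ _ => Finset.mem_univ _) 4 key
  simpa using this

/-- With 26 triples all 78 pairs are covered. -/
theorem ColPacking.exists_sys {F : Finset (Finset (Fin 13) × Fin 7)} (hF : ColPacking F)
    (h26 : F.card = 26) : ∃ col, Sys (fun B => ∃ c, (B, c) ∈ F) col ∧ ∀ b ∈ F, col b.1 = b.2 := by
  have hcol : ∀ B : Finset (Fin 13), ∃ c : Fin 7, (∃ c, (B, c) ∈ F) → (B, c) ∈ F := by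
    intro B
    by_cases h : ∃ c, (B, c) ∈ F
    · exact ⟨h.choose, fun _ => h.choose_spec⟩
    · exact ⟨0, fun h' => absurd h' h⟩
  choose col hcol using hcol
  refine ⟨col, ⟨?_, ?_, ?_, ?_⟩, ?_⟩
  · rintro B ⟨c, h⟩
    exact hF.card_eq _ h
  · intro x y hxy
    have huniv : (F.biUnion fun b => b.1.powersetCard 2) =
        (Finset.univ : Finset (Fin 13)).powersetCard 2 := by
      refine Finset.eq_of_subset_of_card_le (Finset.biUnion_subset.2 fun b _ =>
        Finset.powersetCard_mono (Finset.subset_univ _)) ?_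
      rw [hF.card_biUnion_pairs, card_pairs, h26]
    have hmem : ({x, y} : Finset (Fin 13)) ∈ F.biUnion fun b => b.1.powersetCard 2 := by
      rw [huniv, Finset.mem_powersetCard]
      exact ⟨Finset.subset_univ _, Finset.card_pair hxy⟩
    obtain ⟨b, hb, hxyb⟩ := Finset.mem_biUnion.1 hmem
    have hsub := (Finset.mem_powersetCard.1 hxyb).1
    exact ⟨b.1, ⟨b.2, hb⟩, hsub (by simp), hsub (by simp)⟩
  · rintro B B' ⟨c, h⟩ ⟨c', h'⟩ x y hxy a1 a2 a3 a4
    exact congrArg Prod.fst (hF.eq_of_pair _ h _ h' x y hxy a1 a2 a3 a4)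
  · intro B B' h h' hc x hx hx'
    exact congrArg Prod.fst (hF.eq_of_col _ (hcol B h) _ (hcol B' h') hc x hx hx')
  · intro b hb
    obtain ⟨x, hx, y, hy, hxy⟩ := Finset.one_lt_card.1
      (show 1 < b.1.card by rw [hF.card_eq b hb]; norm_num)
    exact congrArg Prod.snd (hF.eq_of_pair _ (hcol b.1 ⟨b.2, hb⟩) b hb x y hxy hx hy hx hy)

theorem ColPacking.card_ne {F : Finset (Finset (Fin 13) × Fin 7)} (hF : ColPacking F) :
    F.card ≠ 26 := by
  intro h26
  obtain ⟨col, hS, hcol⟩ := hF.exists_sys h26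
  obtain ⟨c₀, -, hc₀⟩ := Finset.exists_lt_card_fiber_of_mul_lt_card_of_maps_to (s := F)
    (t := Finset.univ) (f := fun b => b.2) (n := 3) (fun _ _ => Finset.mem_univ _)
    (by rw [h26, Finset.card_fin]; norm_num)
  obtain ⟨U, hU, hU4⟩ := Finset.exists_subset_card_eq (Nat.succ_le_of_lt hc₀)
  let f : Fin 4 → Finset (Fin 13) × Fin 7 := fun i => (U.equivFinOfCardEq hU4).symm i
  have hf : ∀ i, f i ∈ F ∧ (f i).2 = c₀ := fun i =>
    Finset.mem_filter.1 (hU ((U.equivFinOfCardEq hU4).symm i).2)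
  have hinj : Function.Injective f :=
    Subtype.val_injective.comp (U.equivFinOfCardEq hU4).symm.injective
  have hdisj : ∀ i j, i ≠ j → Disjoint (f i).1 (f j).1 := fun i j hij =>
    Finset.disjoint_left.2 fun x hx hx' => hij (hinj
      (hF.eq_of_col _ (hf i).1 _ (hf j).1 ((hf i).2.trans (hf j).2.symm) x hx hx'))
  have hcard : ∀ i, (f i).1.card = 3 := fun i => hF.card_eq _ (hf i).1
  have hun : ((Finset.univ : Finset (Fin 4)).biUnion fun i => (f i).1)ᶜ.card = 1 := by
    rw [Finset.card_compl, Finset.card_biUnion (fun i _ j _ hij => hdisj i j hij),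
      Finset.sum_congr rfl fun i _ => hcard i]
    rfl
  obtain ⟨z, hz⟩ := Finset.card_eq_one.1 hun
  have hSf : ∀ i, (∃ c, ((f i).1, c) ∈ F) ∧ col (f i).1 = c₀ := fun i =>
    ⟨⟨(f i).2, (hf i).1⟩, (hcol _ (hf i).1).trans (hf i).2⟩
  choose a b c _ _ _ habc using fun i => Finset.card_eq_three.1 (hcard i)
  -- The relabelling that sends the four groups to the four triples of colour `c₀`.
  let q : Fin 13 → Fin 13 :=
    ![a 0, b 0, c 0, a 1, b 1, c 1, a 2, b 2, c 2, a 3, b 3, c 3, z]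
  have hq : Function.Surjective q := by
    intro x
    by_cases hx : x ∈ (Finset.univ : Finset (Fin 4)).biUnion fun i => (f i).1
    · obtain ⟨i, -, hi⟩ := Finset.mem_biUnion.1 hx
      rw [habc i] at hi
      simp only [Finset.mem_insert, Finset.mem_singleton] at hi
      have hk : ∀ i : Fin 4, (∃ k, q k = a i) ∧ (∃ k, q k = b i) ∧ ∃ k, q k = c i := by
        intro i
        fin_cases i
        · exact ⟨⟨0, rfl⟩, ⟨1, rfl⟩, ⟨2, rfl⟩⟩
        · exact ⟨⟨3, rfl⟩, ⟨4, rfl⟩, ⟨5, rfl⟩⟩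
        · exact ⟨⟨6, rfl⟩, ⟨7, rfl⟩, ⟨8, rfl⟩⟩
        · exact ⟨⟨9, rfl⟩, ⟨10, rfl⟩, ⟨11, rfl⟩⟩
      rcases hi with rfl | rfl | rfl
      · exact (hk i).1
      · exact (hk i).2.1
      · exact (hk i).2.2
    · rw [← Finset.mem_compl, hz, Finset.mem_singleton] at hx
      exact ⟨12, hx.symm⟩
  let p : Equiv.Perm (Fin 13) := Equiv.ofBijective q (Finite.surjective_iff_bijective.1 hq)
  refine refuted_14 _ _ (hS.relabel p) c₀ fun t ht => ?_
  have hmap : ∀ (i : Fin 4) (x y w : Fin 13), q x = a i → q y = b i → q w = c i →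
      ({x, y, w} : Finset (Fin 13)).map p.toEmbedding = (f i).1 := by
    intro i x y w hx hy hw
    rw [habc i, ← hx, ← hy, ← hw, Finset.map_insert, Finset.map_insert, Finset.map_singleton]
    rfl
  obtain ⟨i, hi⟩ : ∃ i, t.1.map p.toEmbedding = (f i).1 := by
    simp only [matchingSystem, groups, List.map_nil, List.nil_append, List.mem_cons,
      List.not_mem_nil, or_false] at ht
    rcases ht with rfl | rfl | rfl | rfl
    · exact ⟨0, hmap 0 _ _ _ rfl rfl rfl⟩
    · exact ⟨1, hmap 1 _ _ _ rfl rfl rfl⟩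
    · exact ⟨2, hmap 2 _ _ _ rfl rfl rfl⟩
    · exact ⟨3, hmap 3 _ _ _ rfl rfl rfl⟩
  rw [hi]
  exact ⟨(hSf i).1, fun _ => (hSf i).2⟩

/-! ### Lower bounds -/

/-- Keep only the triples with colours less than `n`. -/
theorem ColPacking.restrict {G : Finset (Finset (Fin 13) × ℕ)} (hG : ColPacking G) (n : ℕ) :
    ∃ F : Finset (Finset (Fin 13) × Fin n), ColPacking F ∧
      F.card = (G.filter fun b => b.2 < n).card := by
  have hinj : Function.Injective fun b : Finset (Fin 13) × Fin n => (b.1, b.2.val) := by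
    rintro ⟨B, c⟩ ⟨B', c'⟩ h
    simpa [Fin.ext_iff] using h
  refine ⟨G.preimage (fun b => (b.1, b.2.val)) hinj.injOn, ⟨?_, ?_, ?_⟩, ?_⟩
  · intro b hb
    exact hG.card_eq _ (Finset.mem_preimage.1 hb)
  · intro b hb b' hb' x y hxy a1 a2 a3 a4
    rw [Finset.mem_preimage] at hb hb'
    exact hinj (hG.eq_of_pair _ hb _ hb' x y hxy a1 a2 a3 a4)
  · intro b hb b' hb' hc x a1 a2
    rw [Finset.mem_preimage] at hb hb'
    exact hinj (hG.eq_of_col _ hb _ hb' (congrArg Fin.val hc) x a1 a2)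
  · classical
    rw [Finset.card_preimage]
    refine congrArg Finset.card (Finset.filter_congr fun b _ =>
      ⟨?_, fun h => ⟨(b.1, ⟨b.2, h⟩), rfl⟩⟩)
    rintro ⟨b', rfl⟩
    exact b'.2.2

theorem colPacking_toFinset {l : List (Finset (Fin 13) × ℕ)}
    (h3 : l.all fun b => b.1.card = 3)
    (h : l.all fun b => l.all fun b' => b = b' ∨
      (b.1 ∩ b'.1).card ≤ if b.2 = b'.2 then 0 else 1) : ColPacking l.toFinset := by
  simp only [List.all_eq_true, decide_eq_true_eq] at h3 h
  simp only [← List.mem_toFinset (l := l)] at h3 h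
  refine ⟨h3, fun b hb b' hb' x y hxy a1 a2 a3 a4 => ?_, fun b hb b' hb' hc x a1 a2 => ?_⟩
  · refine (h b hb b' hb').resolve_right fun hle => ?_
    have : 1 < (b.1 ∩ b'.1).card := Finset.one_lt_card.2
      ⟨x, Finset.mem_inter.2 ⟨a1, a3⟩, y, Finset.mem_inter.2 ⟨a2, a4⟩, hxy⟩
    split at hle <;> omega
  · refine (h b hb b' hb').resolve_right fun hle => ?_
    have : 0 < (b.1 ∩ b'.1).card := Finset.card_pos.2 ⟨x, Finset.mem_inter.2 ⟨a1, a2⟩⟩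
    rw [if_pos hc] at hle
    omega

/-- 24 triples in six classes of four disjoint triples; the number is the colour. -/
def sixClasses : List (Finset (Fin 13) × ℕ) := [
  ({0, 1, 2}, 0), ({3, 4, 5}, 0), ({6, 7, 8}, 0), ({9, 10, 11}, 0),
  ({1, 6, 11}, 1), ({2, 5, 8}, 1), ({3, 9, 12}, 1), ({4, 7, 10}, 1),
  ({0, 8, 10}, 2), ({1, 3, 7}, 2), ({2, 6, 9}, 2), ({5, 11, 12}, 2),
  ({0, 7, 11}, 3), ({1, 8, 9}, 3), ({2, 3, 10}, 3), ({4, 6, 12}, 3),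
  ({0, 4, 9}, 4), ({2, 7, 12}, 4), ({3, 8, 11}, 4), ({5, 6, 10}, 4),
  ({0, 3, 6}, 5), ({1, 10, 12}, 5), ({2, 4, 11}, 5), ({5, 7, 9}, 5)]

/-- A Steiner triple system with eight colours. Colour 7 is used only once, so the colours `0, …, 6` carry
25 triples. -/
def eightClasses : List (Finset (Fin 13) × ℕ) := [
  ({0, 9, 10}, 0), ({1, 3, 8}, 0), ({4, 6, 11}, 0), ({5, 7, 12}, 0),
  ({0, 5, 11}, 1), ({2, 3, 6}, 1), ({8, 9, 12}, 1),
  ({2, 8, 10}, 2), ({3, 4, 7}, 2), ({5, 6, 9}, 2),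
  ({1, 4, 9}, 3), ({2, 11, 12}, 3), ({6, 7, 10}, 3),
  ({0, 2, 4}, 4), ({1, 6, 12}, 4), ({3, 5, 10}, 4), ({7, 8, 11}, 4),
  ({0, 6, 8}, 5), ({1, 2, 5}, 5), ({3, 9, 11}, 5), ({4, 10, 12}, 5),
  ({0, 3, 12}, 6), ({1, 10, 11}, 6), ({2, 7, 9}, 6), ({4, 5, 8}, 6),
  ({0, 1, 7}, 7)]

theorem colPacking_sixClasses : ColPacking sixClasses.toFinset :=
  colPacking_toFinset (by decide +kernel) (by decide +kernel)

theorem colPacking_eightClasses : ColPacking eightClasses.toFinset :=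
  colPacking_toFinset (by decide +kernel) (by decide +kernel)

theorem genPackingNumber_eq {n N : ℕ} (hn : 1 ≤ n)
    (hle : ∀ F : Finset (Finset (Fin 13) × Fin n), ColPacking F → F.card ≤ N)
    {G : Finset (Finset (Fin 13) × ℕ)} (hG : ColPacking G)
    (hN : (G.filter fun b => b.2 < n).card = N) :
    genPackingNumber (Fin 2) 2 1 ![13, n] ![3, 1] = N := by
  refine IsGreatest.csSup_eq ⟨?_, ?_⟩
  · obtain ⟨F, hF, hFN⟩ := hG.restrict n
    obtain ⟨P, hP, hPF⟩ := hF.exists_packing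
    exact ⟨P, hP, by rw [hPF, hFN, hN]⟩
  · rintro _ ⟨P, hP, rfl⟩
    obtain ⟨F, hF, hFP⟩ := exists_colPacking hn hP
    exact hFP ▸ hle F hF

/-- the generalized packing numbers for `𝐯 = (13,v₂)` and `𝐤 = (3,1)`. -/
theorem stmt11 (v₂ : ℕ) (h : 1 ≤ v₂) :
    (v₂ ≤ 6 → genPackingNumber (Fin 2) 2 1 ![13, v₂] ![3, 1] = 4 * v₂) ∧
    (v₂ = 7 → genPackingNumber (Fin 2) 2 1 ![13, v₂] ![3, 1] = 25) ∧
    (8 ≤ v₂ → genPackingNumber (Fin 2) 2 1 ![13, v₂] ![3, 1] = 26) := by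
  refine ⟨fun h6 => ?_, fun h7 => ?_, fun h8 => ?_⟩
  · refine genPackingNumber_eq h (fun F hF => hF.card_le_four_mul) colPacking_sixClasses ?_
    interval_cases v₂ <;> decide +kernel
  · subst h7
    refine genPackingNumber_eq h (fun F hF => ?_) colPacking_eightClasses (by decide +kernel)
    have h26 := hF.card_le
    have hne := hF.card_ne
    omega
  · refine genPackingNumber_eq h (fun F hF => hF.card_le) colPacking_eightClasses ?_
    have hlt : ∀ b ∈ eightClasses.toFinset, b.2 < v₂ := by
      have hall : eightClasses.all fun b => b.2 < 8 := by decide +kernel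
      simp only [List.all_eq_true, decide_eq_true_eq] at hall
      exact fun b hb => (hall b (List.mem_toFinset.1 hb)).trans_le h8
    rw [Finset.filter_true_of_mem hlt]
    decide +kernel
end

section
/- Let s and n be positive integers. If there exists a Howell design H(s,2n), then for 𝐯 = (2n,s,s) and 𝐤 = (2,1,1) there exists a 2-(𝐯,𝐤,1) generalized packing with s·n blocks, and D(𝐯,𝐤,2) = s·n. -/
/-!
The blocks `(A i j, {i}, {j})`, over the nonempty cells `(i, j)` of the Howell design, form the
packing. A block is determined by a pair of symbols (pairs do not repeat), by a symbol and a row,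
by a symbol and a column, or by a row and a column, and these are all the admissible types.
Each of the `s` rows contains each of the `2n` symbols once, so there are `s * 2n / 2` blocks.

Conversely, in any packing a pair (symbol, point of the second set) lies in at most one block,
while each block contains exactly two such pairs; hence `2 |P| ≤ 2n * s`
(`two_mul_card_eq_sum`, `card_le_of_packing`).
-/

open Finset

/-- A Howell design `H(s,2n)`: an `s × s` array, each cell empty or an unordered pair of
symbols from an alphabet of size `2n`, each symbol exactly once in each row and column,
and each pair in at most one cell. -/
def IsHowell (s n : ℕ) (A : Fin s → Fin s → Finset (Fin (2 * n))) : Prop :=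
  (∀ i j, A i j = ∅ ∨ (A i j).card = 2) ∧
  (∀ i, ∀ x : Fin (2 * n), (Finset.univ.filter fun j => x ∈ A i j).card = 1) ∧
  (∀ j, ∀ x : Fin (2 * n), (Finset.univ.filter fun i => x ∈ A i j).card = 1) ∧
  (∀ i j i' j', (i, j) ≠ (i', j') → (A i j).card = 2 → A i j ≠ A i' j')

/-- The tuple of sets `(a, b, c)`, as a dependent function on `Fin 3`. -/
def tripleBlock {p q r : ℕ} (a : Finset (Fin p)) (b : Finset (Fin q)) (c : Finset (Fin r)) :
    ∀ i : Fin 3, Finset (Fin (![p, q, r] i))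
  | 0 => a
  | 1 => b
  | 2 => c

/-- Double counting of the incidences between blocks and pairs in `X₁ × X₂`. -/
lemma two_mul_card_eq_sum {p q r : ℕ} (P : Multiset (∀ i : Fin 3, Finset (Fin (![p, q, r] i))))
    (hP : ∀ B ∈ P, (B 0).card = 2 ∧ (B 1).card = 1) :
    2 * Multiset.card P = ∑ z : Fin p × Fin q,
      (P.filter (fun B => ∀ i, tripleBlock {z.1} {z.2} (∅ : Finset (Fin r)) i ⊆ B i)).card := by
  induction P using Multiset.induction with
  | empty => simp
  | cons B P ih =>
    have ih' := ih (fun C hC => hP C (Multiset.mem_cons_of_mem hC))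
    obtain ⟨h0, h1⟩ := hP B (Multiset.mem_cons_self B P)
    have key : (∑ z : Fin p × Fin q,
        if (∀ i, tripleBlock {z.1} {z.2} (∅ : Finset (Fin r)) i ⊆ B i) then 1 else 0) = 2 := by
      rw [← Finset.card_filter]
      have : (univ.filter fun z : Fin p × Fin q =>
          ∀ i, tripleBlock {z.1} {z.2} (∅ : Finset (Fin r)) i ⊆ B i)
          = (show Finset (Fin p) from B 0) ×ˢ (show Finset (Fin q) from B 1) := by
        ext z
        simp only [Finset.mem_filter, Finset.mem_univ, true_and]
        refine Iff.trans ?_ Finset.mem_product.symm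
        constructor
        · intro h
          exact ⟨h 0 (Finset.mem_singleton_self z.1), h 1 (Finset.mem_singleton_self z.2)⟩
        · rintro ⟨ha, hb⟩ i
          fin_cases i
          · exact Finset.singleton_subset_iff.2 ha
          · exact Finset.singleton_subset_iff.2 hb
          · exact Finset.empty_subset _
      rw [this, Finset.card_product]
      exact (congrArg₂ (· * ·) h0 h1)
    rw [Multiset.card_cons, mul_add, ih', mul_one]
    conv_lhs => rw [← key]
    rw [← Finset.sum_add_distrib]
    refine Finset.sum_congr rfl fun z _ => ?_
    rw [Multiset.filter_cons]
    split_ifs <;> simp [add_comm]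

lemma card_le_of_packing {s n : ℕ} (P : Multiset (∀ i : Fin 3, Finset (Fin (![2 * n, s, s] i))))
    (hP : IsGenPacking 2 1 ![2 * n, s, s] ![2, 1, 1] P) : Multiset.card P ≤ s * n := by
  have h := two_mul_card_eq_sum P (fun B hB => ⟨hP.1 B hB 0, hP.1 B hB 1⟩)
  have h2 : ∀ z ∈ (univ : Finset (Fin (2 * n) × Fin s)),
      (P.filter (fun B => ∀ i, tripleBlock {z.1} {z.2} (∅ : Finset (Fin s)) i ⊆ B i)).card
        ≤ 1 := by
    intro z _
    -- `convert` reconciles the two decidability instances of the filter predicate.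
    convert hP.2 ![1, 1, 0] ?_ (by simp [Fin.sum_univ_three])
      (tripleBlock {z.1} {z.2} (∅ : Finset (Fin s))) ?_
    · intro i; fin_cases i <;> simp
    · intro i
      fin_cases i
      · exact Finset.card_singleton z.1
      · exact Finset.card_singleton z.2
      · exact Finset.card_empty
  have h3 := Finset.sum_le_card_nsmul _ _ 1 h2
  rw [← h] at h3
  simp only [Finset.card_univ, Fintype.card_prod, Fintype.card_fin, smul_eq_mul, mul_one] at h3
  nlinarith

/-- A Howell design has `s * n` nonempty cells: each row contains each of the `2n` symbols once,
and each nonempty cell holds two symbols. -/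
lemma card_cells {s n : ℕ} {A : Fin s → Fin s → Finset (Fin (2 * n))} (hA : IsHowell s n A) :
    (univ.filter fun z : Fin s × Fin s => (A z.1 z.2).card = 2).card = s * n := by
  obtain ⟨h1, h2, -, -⟩ := hA
  have e1 : ∑ z : Fin s × Fin s, (A z.1 z.2).card
      = 2 * (univ.filter fun z : Fin s × Fin s => (A z.1 z.2).card = 2).card := by
    rw [Finset.card_filter, Finset.mul_sum]
    refine Finset.sum_congr rfl fun z _ => ?_
    rcases h1 z.1 z.2 with h | h <;> simp [h]
  have e2 : ∑ z : Fin s × Fin s, (A z.1 z.2).card = s * (2 * n) := by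
    rw [Fintype.sum_prod_type]
    have : ∀ i : Fin s, ∑ j, (A i j).card = 2 * n := by
      intro i
      have := Finset.sum_card_bipartiteAbove_eq_sum_card_bipartiteBelow
        (s := (univ : Finset (Fin s))) (t := (univ : Finset (Fin (2 * n))))
        (fun j x => x ∈ A i j)
      simp only [Finset.bipartiteAbove, Finset.bipartiteBelow, h2 i] at this
      simpa using this
    simp [this]
  nlinarith

/-- The blocks `(A i j, {i}, {j})` over the nonempty cells `(i, j)` of a Howell design. -/
def howellBlocks {s n : ℕ} (A : Fin s → Fin s → Finset (Fin (2 * n))) :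
    Multiset (∀ i : Fin 3, Finset (Fin (![2 * n, s, s] i))) :=
  (univ.filter fun z : Fin s × Fin s => (A z.1 z.2).card = 2).val.map
    fun z => tripleBlock (A z.1 z.2) {z.1} {z.2}

lemma howellBlocks_isGenPacking {s n : ℕ} {A : Fin s → Fin s → Finset (Fin (2 * n))}
    (hA : IsHowell s n A) : IsGenPacking 2 1 ![2 * n, s, s] ![2, 1, 1] (howellBlocks A) := by
  obtain ⟨-, hrow, hcol, hpair⟩ := hA
  constructor
  · intro B hB i
    obtain ⟨z, hz, rfl⟩ := Multiset.mem_map.1 hB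
    have hz' : (A z.1 z.2).card = 2 := (Finset.mem_filter.1 hz).2
    fin_cases i
    · exact hz'
    · exact Finset.card_singleton z.1
    · exact Finset.card_singleton z.2
  · intro t' hle hsum T hT
    rw [howellBlocks, Multiset.filter_map, Multiset.card_map, ← Finset.filter_val,
      Finset.card_val, Finset.card_le_one]
    rintro ⟨i, j⟩ hz ⟨i', j'⟩ hw
    simp only [Finset.mem_filter, Finset.mem_univ, true_and, Function.comp] at hz hw
    obtain ⟨hz2, hzT⟩ := hz
    obtain ⟨hw2, hwT⟩ := hw
    have z0 : (show Finset (Fin (2 * n)) from T 0) ⊆ A i j := hzT 0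
    have w0 : (show Finset (Fin (2 * n)) from T 0) ⊆ A i' j' := hwT 0
    have z1 : (show Finset (Fin s) from T 1) ⊆ {i} := hzT 1
    have w1 : (show Finset (Fin s) from T 1) ⊆ {i'} := hwT 1
    have z2 : (show Finset (Fin s) from T 2) ⊆ {j} := hzT 2
    have w2 : (show Finset (Fin s) from T 2) ⊆ {j'} := hwT 2
    have c0 : (show Finset (Fin (2 * n)) from T 0).card = t' 0 := hT 0
    have c1 : (show Finset (Fin s) from T 1).card = t' 1 := hT 1
    have c2 : (show Finset (Fin s) from T 2).card = t' 2 := hT 2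
    have l0 : t' 0 ≤ 2 := hle 0
    have l1 : t' 1 ≤ 1 := hle 1
    have l2 : t' 2 ≤ 1 := hle 2
    rw [Fin.sum_univ_three] at hsum
    generalize (show Finset (Fin (2 * n)) from T 0) = T0 at z0 w0 c0
    generalize (show Finset (Fin s) from T 1) = T1 at z1 w1 c1
    generalize (show Finset (Fin s) from T 2) = T2 at z2 w2 c2
    have hi : t' 1 = 1 → i = i' := by
      intro h
      obtain ⟨a, ha⟩ := Finset.card_pos.1 (by omega : 0 < T1.card)
      rw [← Finset.mem_singleton.1 (z1 ha), ← Finset.mem_singleton.1 (w1 ha)]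
    have hj : t' 2 = 1 → j = j' := by
      intro h
      obtain ⟨a, ha⟩ := Finset.card_pos.1 (by omega : 0 < T2.card)
      rw [← Finset.mem_singleton.1 (z2 ha), ← Finset.mem_singleton.1 (w2 ha)]
    by_cases h0 : t' 0 = 2
    · by_contra hne
      refine hpair i j i' j' hne hz2 ?_
      rw [← Finset.eq_of_subset_of_card_le z0 (by omega),
        ← Finset.eq_of_subset_of_card_le w0 (by omega)]
    by_cases h0' : t' 0 = 0
    · rw [hi (by omega), hj (by omega)]
    obtain ⟨x, hx⟩ := Finset.card_pos.1 (by omega : 0 < T0.card)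
    by_cases h1 : t' 1 = 1
    · obtain rfl := hi h1
      have := Finset.card_le_one.1 (hrow i x).le j (by simpa using z0 hx) j' (by simpa using w0 hx)
      rw [this]
    · obtain rfl := hj (by omega)
      have := Finset.card_le_one.1 (hcol j x).le i (by simpa using z0 hx) i' (by simpa using w0 hx)
      rw [this]

/-- a Howell design `H(s,2n)` gives a `2`-`((2n,s,s),(2,1,1),1)` generalized
packing with `s·n` blocks, and the generalized packing number equals `s·n`. -/
theorem stmt13 (s n : ℕ) (hs : 1 ≤ s) (hn : 1 ≤ n)
    (A : Fin s → Fin s → Finset (Fin (2 * n))) (hA : IsHowell s n A) :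
    (∃ P : Multiset (∀ i : Fin 3, Finset (Fin (![2 * n, s, s] i))),
        IsGenPacking 2 1 ![2 * n, s, s] ![2, 1, 1] P ∧ Multiset.card P = s * n) ∧
    genPackingNumber (Fin 3) 2 1 ![2 * n, s, s] ![2, 1, 1] = s * n := by
  have hex : ∃ P : Multiset (∀ i : Fin 3, Finset (Fin (![2 * n, s, s] i))),
      IsGenPacking 2 1 ![2 * n, s, s] ![2, 1, 1] P ∧ Multiset.card P = s * n :=
    ⟨howellBlocks A, howellBlocks_isGenPacking hA, by
      rw [howellBlocks, Multiset.card_map, Finset.card_val, card_cells hA]⟩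
  refine ⟨hex, IsGreatest.csSup_eq ⟨hex, ?_⟩⟩
  rintro N ⟨P, hP, rfl⟩
  exact card_le_of_packing P hP
end

section
/- Let 𝐯 = (v₁,v₂,v₃) with 2 ≤ v₁ ≤ v₂ ≤ v₃ and v₁ ∉ {3,4,5,6}, and let 𝐤 = (2,1,1). Then D(𝐯,𝐤,2) = C(v₁,2) = v₁(v₁−1)/2. -/
/-!
The blocks of a packing of type `(2,1,1)` have distinct first components, which gives the upper
bound `C(v₁, 2)` (`card_le_of_isGenPacking`). The bound is attained as soon as the complete graph
on `v₁` vertices has two orthogonal proper edge colourings with at most `v₁` colours: the edge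
`xy` with colours `c, d` gives the block `({x, y}, {c}, {d})` (`isGenPacking_edgeBlock`).

For odd `v₁ ≥ 7` such colourings come from a Room square of side `v₁`, and for even `v₁ ≥ 8` from
one of side `v₁ - 1` by putting the point at infinity back; `v₁ = 2` is trivial. So the core is
the existence of Room squares of every odd side `2 N + 1 ≥ 7` (`room_odd`), by strong induction.

* For a finite list of values of `N`, the square is developed from a strong starter in the cyclic
  group of order `2 N + 1` (`room_of_starter`). Side nine has no such starter and is given
  explicitly.
* For all other `N`, write `N = 5 m + w` with `m` coprime to `6` and `w ≤ m` (`exists_split`).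
  Take the transversal design with six groups of size `m` given by the lines over `ZMod m`,
  truncate one group to `w` points, double every point and add a point at infinity. The blocks
  carry Room frames of type `2⁵` or `2⁶`, each group together with infinity carries a Room square
  of side `2 m + 1` or `2 w + 1`, and these pieces fit together to a Room square of side
  `2 N + 1` (`room_step`).

Room squares and Room frames are treated uniformly as a structure `IsRoom` on a graph, chosen such
that it passes from the parts of an edge decomposition to the whole (`RoomGraph.glue`).
-/

open Finset

/-! ### Room frames on graphs -/

/-- `a` and `b` are two proper edge colourings of `Γ`, with the vertices as colours, that are
orthogonal (an edge is determined by its pair of colours) and such that the two colours of an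
edge are adjacent in `Γ` to its end points and to each other. For complete `Γ` this is a
standardized Room square (the pair `xy` sits in row `a x y`, column `b x y`, and the diagonal
belongs to the point at infinity); for complete multipartite `Γ` it is a Room frame. Values on
non-edges are irrelevant. -/
structure IsRoom {V : Type*} (Γ : SimpleGraph V) (a b : V → V → V) : Prop where
  comm : ∀ x y, Γ.Adj x y → a x y = a y x ∧ b x y = b y x
  adj : ∀ x y, Γ.Adj x y → Γ.Adj x (a x y) ∧ Γ.Adj x (b x y) ∧ Γ.Adj (a x y) (b x y)
  inj : ∀ x y z, Γ.Adj x y → Γ.Adj x z → a x y = a x z ∨ b x y = b x z → y = z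
  orth : ∀ x y z w, Γ.Adj x y → Γ.Adj z w → a x y = a z w → b x y = b z w →
    (x = z ∧ y = w) ∨ (x = w ∧ y = z)

/-- `Γ` carries a Room frame. -/
def RoomGraph {V : Type*} (Γ : SimpleGraph V) : Prop :=
  ∃ a b, IsRoom Γ a b

/-- If the edge set of `Γ` is the disjoint union of the edge sets of Room graphs `Δ i`, then `Γ`
is a Room graph: each edge is coloured inside its own piece. By the adjacency conditions a
coincidence of colours at a vertex, or of both colours of two edges, names an edge common to the
two pieces, so it can only happen within one piece. -/
theorem RoomGraph.glue {V ι : Type*} {Γ : SimpleGraph V} (Δ : ι → SimpleGraph V)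
    (hΔ : ∀ i, RoomGraph (Δ i)) (hΓ : ∀ x y, Γ.Adj x y ↔ ∃ i, (Δ i).Adj x y)
    (huniq : ∀ i j x y, (Δ i).Adj x y → (Δ j).Adj x y → i = j) : RoomGraph Γ := by
  choose A B h using hΔ
  have key : ∀ x y, ∃ c d, ∀ i, (Δ i).Adj x y → c = A i x y ∧ d = B i x y := by
    intro x y
    by_cases hxy : ∃ i, (Δ i).Adj x y
    · obtain ⟨i, hi⟩ := hxy
      refine ⟨A i x y, B i x y, fun j hj => ?_⟩
      obtain rfl := huniq i j x y hi hj
      exact ⟨rfl, rfl⟩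
    · exact ⟨x, x, fun i hi => (hxy ⟨i, hi⟩).elim⟩
  choose a b hab using key
  refine ⟨a, b, ?_, ?_, ?_, ?_⟩
  · intro x y hxy
    obtain ⟨i, hi⟩ := (hΓ x y).1 hxy
    have := (h i).comm x y hi
    rw [(hab x y i hi).1, (hab x y i hi).2, (hab y x i hi.symm).1, (hab y x i hi.symm).2]
    exact this
  · intro x y hxy
    obtain ⟨i, hi⟩ := (hΓ x y).1 hxy
    obtain ⟨h1, h2, h3⟩ := (h i).adj x y hi
    rw [(hab x y i hi).1, (hab x y i hi).2]
    exact ⟨(hΓ _ _).2 ⟨i, h1⟩, (hΓ _ _).2 ⟨i, h2⟩, (hΓ _ _).2 ⟨i, h3⟩⟩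
  · intro x y z hxy hxz he
    obtain ⟨i, hi⟩ := (hΓ x y).1 hxy
    obtain ⟨j, hj⟩ := (hΓ x z).1 hxz
    rw [(hab x y i hi).1, (hab x y i hi).2, (hab x z j hj).1, (hab x z j hj).2] at he
    obtain ⟨h1, h2, -⟩ := (h i).adj x y hi
    obtain ⟨h1', h2', -⟩ := (h j).adj x z hj
    -- the edge from `x` to the common value lies in both pieces
    have hij : i = j := by
      rcases he with he | he
      · exact huniq i j _ _ h1 (he ▸ h1')
      · exact huniq i j _ _ h2 (he ▸ h2')
    subst hij
    exact (h i).inj x y z hi hj he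
  · intro x y z w hxy hzw ha hb
    obtain ⟨i, hi⟩ := (hΓ x y).1 hxy
    obtain ⟨j, hj⟩ := (hΓ z w).1 hzw
    rw [(hab x y i hi).1, (hab z w j hj).1] at ha
    rw [(hab x y i hi).2, (hab z w j hj).2] at hb
    have hij : i = j := by
      refine huniq i j _ _ ((h i).adj x y hi).2.2 ?_
      rw [ha, hb]
      exact ((h j).adj z w hj).2.2
    subst hij
    exact (h i).orth x y z w hi hj ha hb

/-- Room graphs are carried along injections; the vertices outside the range of `f` are isolated
in `Γ`. -/
theorem RoomGraph.transport {V W : Type*} {Γ : SimpleGraph V} {Δ : SimpleGraph W}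
    (hΔ : RoomGraph Δ) (f : W → V) (hf : Function.Injective f)
    (hΓ : ∀ x y, Γ.Adj x y ↔ ∃ x' y', Δ.Adj x' y' ∧ f x' = x ∧ f y' = y) : RoomGraph Γ := by
  obtain ⟨A, B, h⟩ := hΔ
  have key : ∀ x y, ∃ c d, ∀ x' y', f x' = x → f y' = y → c = f (A x' y') ∧ d = f (B x' y') := by
    intro x y
    by_cases hxy : ∃ x' y', f x' = x ∧ f y' = y
    · obtain ⟨x', y', rfl, rfl⟩ := hxy
      refine ⟨f (A x' y'), f (B x' y'), fun x'' y'' hx hy => ?_⟩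
      rw [hf hx, hf hy]
      exact ⟨rfl, rfl⟩
    · exact ⟨x, x, fun x' y' hx hy => (hxy ⟨x', y', hx, hy⟩).elim⟩
  choose a b hab using key
  have ha : ∀ x y, a (f x) (f y) = f (A x y) := fun x y => (hab _ _ x y rfl rfl).1
  have hb : ∀ x y, b (f x) (f y) = f (B x y) := fun x y => (hab _ _ x y rfl rfl).2
  refine ⟨a, b, ?_, ?_, ?_, ?_⟩
  · intro x y hxy
    obtain ⟨x, y, hi, rfl, rfl⟩ := (hΓ x y).1 hxy
    rw [ha, ha, hb, hb, (h.comm x y hi).1, (h.comm x y hi).2]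
    exact ⟨rfl, rfl⟩
  · intro x y hxy
    obtain ⟨x, y, hi, rfl, rfl⟩ := (hΓ x y).1 hxy
    obtain ⟨h1, h2, h3⟩ := h.adj x y hi
    rw [ha, hb]
    exact ⟨(hΓ _ _).2 ⟨_, _, h1, rfl, rfl⟩, (hΓ _ _).2 ⟨_, _, h2, rfl, rfl⟩,
      (hΓ _ _).2 ⟨_, _, h3, rfl, rfl⟩⟩
  · intro x y z hxy hxz he
    obtain ⟨x, y, hi, rfl, rfl⟩ := (hΓ x y).1 hxy
    obtain ⟨x', z, hj, hx, rfl⟩ := (hΓ _ z).1 hxz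
    obtain rfl := hf hx
    simp only [ha, hb, hf.eq_iff] at he
    rw [h.inj _ y z hi hj he]
  · intro x y z w hxy hzw h1 h2
    obtain ⟨x, y, hi, rfl, rfl⟩ := (hΓ x y).1 hxy
    obtain ⟨z, w, hj, rfl, rfl⟩ := (hΓ z w).1 hzw
    simp only [ha, hb, hf.eq_iff] at h1 h2 ⊢
    exact h.orth x y z w hi hj h1 h2

/-- There is a standardized Room square of side `n`, encoded as a Room frame on `K_n`. -/
def Room (n : ℕ) : Prop := RoomGraph (⊤ : SimpleGraph (Fin n))

theorem Room.top {W : Type*} [Fintype W] {n : ℕ} (h : Room n) (hW : Fintype.card W = n) :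
    RoomGraph (⊤ : SimpleGraph W) := by
  have e : Fin n ≃ W := (Fintype.equivFinOfCardEq hW).symm
  refine RoomGraph.transport h e e.injective fun x y => ?_
  constructor
  · intro hxy
    exact ⟨e.symm x, e.symm y, by simpa using hxy, by simp, by simp⟩
  · rintro ⟨x, y, hxy, rfl, rfl⟩
    simpa using hxy

theorem room_one : Room 1 :=
  ⟨fun x _ => x, fun x _ => x, by
    constructor <;> intro x y <;> simp [Subsingleton.elim x y]⟩

/-- The complete multipartite graph with parts `{k} × Fin 2` of size two, indexed by `K`. -/
def cocktail (K : Type*) : SimpleGraph (K × Fin 2) := (⊤ : SimpleGraph K).comap Prod.fst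

theorem RoomGraph.cocktail_congr {K L : Type*} (e : K ≃ L) (h : RoomGraph (cocktail K)) :
    RoomGraph (cocktail L) := by
  refine RoomGraph.transport h (Prod.map e id) (e.injective.prodMap Function.injective_id)
    fun x y => ?_
  constructor
  · intro hxy
    refine ⟨(e.symm x.1, x.2), (e.symm y.1, y.2), ?_, by simp, by simp⟩
    simpa [cocktail] using hxy
  · rintro ⟨x, y, hxy, rfl, rfl⟩
    simpa [cocktail] using hxy

/-! ### Room squares from strong starters -/

/-- `L = [0, F 1, …, F N]` lists the values of an even function `F` on `ZMod n`, `n = 2 * N + 1`,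
with `F 0 = 0`, which takes different values at `0, …, N` and for which `e ↦ e + F e` is a
permutation of `ZMod n`. Equivalently, the pairs `{F e + e, F e - e}`, `1 ≤ e ≤ N`, form a strong
starter of `ZMod n`. -/
def IsStarter (L : List ℕ) : Prop :=
  L.head? = some 0 ∧ (∀ c ∈ L, c < 2 * L.length - 1) ∧ L.Nodup ∧
    ((List.range (2 * L.length - 1)).map fun j =>
      (j + L.getD (min j (2 * L.length - 1 - j)) 0) % (2 * L.length - 1)).Nodup

/-- The colours of `xy` are the midpoint `c = (x + y) / 2` and `c + F ((y - x) / 2)`. -/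
theorem room_of_starter {N : ℕ} {L : List ℕ} (hL : IsStarter L) (hN : L.length = N + 1) :
    Room (2 * N + 1) := by
  obtain ⟨h0, hlt, hnd, hperm⟩ := hL
  have hn : 2 * L.length - 1 = 2 * N + 1 := by omega
  rw [hn] at hlt hperm
  let n := 2 * N + 1
  let f : ℕ → ℕ := fun j => L.getD (min j (n - j)) 0
  let F : ZMod n → ZMod n := fun e => (f e.val : ZMod n)
  have hidx : ∀ e : ZMod n, min e.val (n - e.val) < L.length := by
    intro e
    omega
  have hf : ∀ e : ZMod n, f e.val = L[min e.val (n - e.val)]'(hidx e) := fun e => by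
    simp only [f]
    rw [List.getD_eq_getElem]
  have hflt : ∀ e : ZMod n, f e.val < n := fun e => by
    rw [hf]
    exact hlt _ (List.getElem_mem _)
  have hFval : ∀ e, (F e).val = f e.val := fun e => ZMod.val_cast_of_lt (hflt e)
  have hF0 : F 0 = 0 := by
    cases L with
    | nil => simp at h0
    | cons c l =>
      simp only [List.head?_cons, Option.some.injEq] at h0
      simp [F, f, h0]
  have hFneg : ∀ e, F (-e) = F e := by
    intro e
    by_cases he : e = 0
    · simp [he]
    · have : (-e).val = n - e.val := by rw [ZMod.neg_val, if_neg he]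
      have h1 := ZMod.val_lt e
      simp only [F, f, this]
      rw [show n - (n - e.val) = e.val by omega, min_comm]
  have hFinj : ∀ d e, F d = F e → d = e ∨ d = -e := by
    intro d e h
    have h1 : f d.val = f e.val := by rw [← hFval, ← hFval, h]
    rw [hf, hf, hnd.getElem_inj_iff] at h1
    have hd := ZMod.val_lt d
    have he := ZMod.val_lt e
    by_cases hde : d.val = e.val
    · exact Or.inl (ZMod.val_injective n hde)
    · right
      apply ZMod.val_injective n
      rw [ZMod.neg_val]
      split_ifs with h0
      · subst h0
        have h00 : (0 : ZMod n).val = 0 := ZMod.val_zero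
        omega
      · omega
  have hH : ∀ d e, d + F d = e + F e → d = e := by
    intro d e h
    have h1 : (d.val + f d.val) % n = (e.val + f e.val) % n := by
      rw [← hFval, ← hFval, ← ZMod.val_add, ← ZMod.val_add, h]
    have h2 := List.inj_on_of_nodup_map hperm (List.mem_range.2 (ZMod.val_lt d))
      (List.mem_range.2 (ZMod.val_lt e)) h1
    exact ZMod.val_injective n h2
  -- `t` is the inverse of `2`
  let t : ZMod n := (N + 1 : ℕ)
  have ht : t * 2 = 1 := by
    have : ((2 * N + 1 : ℕ) : ZMod n) = 0 := ZMod.natCast_self n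
    simp only [t]
    push_cast at this ⊢
    linear_combination this
  have hcancel : ∀ u v : ZMod n, t * u = t * v → u = v := by
    intro u v h
    linear_combination 2 * h - (u - v) * ht
  have hFne : ∀ e, e ≠ 0 → F e ≠ 0 := by
    intro e he h
    rw [← hF0] at h
    rcases hFinj _ _ h with h | h
    · exact he h
    · exact he (h.trans neg_zero)
  have hroom : IsRoom (⊤ : SimpleGraph (ZMod n)) (fun x y => t * (x + y))
      (fun x y => t * (x + y) + F (t * (y - x))) := by
    have hsub : ∀ x y : ZMod n, x ≠ y → t * (y - x) ≠ 0 := by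
      intro x y hxy h
      exact hxy (hcancel x y (by linear_combination -h))
    refine ⟨?_, ?_, ?_, ?_⟩
    · intro x y _
      refine ⟨by rw [add_comm], ?_⟩
      rw [add_comm x y, ← hFneg (t * (y - x))]
      congr 2
      ring
    · intro x y hxy
      simp only [SimpleGraph.top_adj] at hxy ⊢
      refine ⟨fun h => ?_, fun h => ?_, fun h => ?_⟩
      · exact hsub x y hxy (by linear_combination -h - x * ht)
      · refine hsub x y hxy (hH _ 0 ?_)
        rw [hF0]
        linear_combination -h - x * ht
      · exact hFne _ (hsub x y hxy) (by linear_combination -h)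
    · intro x y z _ _ h
      rcases h with h | h
      · exact hcancel y z (by linear_combination h)
      · have := hH (t * (y - x)) (t * (z - x)) (by linear_combination h)
        exact hcancel y z (by linear_combination this)
    · intro x y z w _ _ h1 h2
      have h3 := hcancel _ _ h1
      have h4 : F (t * (y - x)) = F (t * (w - z)) := by
        linear_combination h2 - h1
      rcases hFinj _ _ h4 with h | h
      · left
        have h5 : y - x = w - z := hcancel _ _ h
        exact ⟨hcancel _ _ (by linear_combination (t * t) * (h3 - h5) + t * (z - x) * ht),
          hcancel _ _ (by linear_combination (t * t) * (h3 + h5) + t * (w - y) * ht)⟩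
      · right
        have h5 : y - x = z - w := hcancel _ _ (by linear_combination h)
        exact ⟨hcancel _ _ (by linear_combination (t * t) * (h3 - h5) + t * (w - x) * ht),
          hcancel _ _ (by linear_combination (t * t) * (h3 + h5) + t * (z - y) * ht)⟩
  exact ⟨_, _, hroom⟩

/-! ### Small Room squares and frames -/

/-- Starters in the sense of `IsStarter`. They cover every `N ≥ 3` except `4` that cannot be
written as in `exists_split`. -/
def starters : List (List ℕ) :=
  [[0, 5, 3, 6],
   [0, 5, 1, 4, 9, 3],
   [0, 7, 1, 8, 11, 9, 3],
   [0, 7, 11, 2, 8, 6, 1, 10],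
   [0, 4, 9, 7, 12, 1, 3, 5, 10],
   [0, 2, 15, 18, 12, 9, 5, 17, 1, 16],
   [0, 18, 5, 9, 14, 10, 8, 6, 3, 13, 19],
   [0, 14, 6, 17, 22, 12, 18, 3, 1, 20, 15, 10],
   [0, 18, 10, 13, 3, 8, 21, 4, 1, 5, 16, 9, 17],
   [0, 21, 8, 26, 17, 4, 13, 11, 24, 6, 18, 14, 2, 25],
   [0, 18, 1, 19, 8, 3, 15, 17, 28, 22, 24, 12, 23, 2, 11],
   [0, 13, 30, 20, 9, 1, 27, 18, 16, 25, 5, 29, 10, 17, 24, 4],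
   [0, 23, 28, 6, 19, 3, 11, 9, 29, 10, 2, 17, 8, 31, 13, 25, 30],
   [0, 29, 9, 16, 25, 1, 11, 27, 10, 13, 34, 3, 20, 23, 2, 18, 31, 8],
   [0, 28, 22, 29, 8, 30, 12, 35, 15, 2, 7, 25, 21, 26, 17, 23, 31, 36, 3],
   [0, 20, 30, 33, 19, 13, 7, 24, 6, 29, 12, 37, 17, 38, 2, 9, 26, 28, 25, 15],
   [0, 4, 18, 5, 29, 17, 34, 22, 31, 33, 28, 20, 23, 8, 40, 19, 35, 13, 9, 36, 27],
   [0, 13, 6, 30, 42, 4, 26, 38, 27, 15, 3, 29, 41, 35, 25, 22, 1, 8, 5, 2, 21, 37],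
   [0, 42, 33, 25, 3, 35, 7, 40, 16, 14, 29, 27, 44, 5, 11, 36, 20, 43, 30, 1, 9, 38, 32],
   [0, 5, 20, 12, 35, 28, 36, 45, 6, 17, 9, 23, 15, 24, 7, 39, 13, 11, 31, 29, 16, 46, 10, 40],
   [0, 44, 31, 14, 9, 7, 41, 43, 34, 12, 18, 27, 36, 10, 45, 29, 48, 5, 37, 39, 47, 13, 3, 30, 15],
   [0, 45, 43, 20, 24, 11, 19, 5, 22, 51, 46, 29, 27, 50, 18, 16, 13, 26, 40, 14, 41, 17, 33, 49,
   23, 52, 8],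
   [0, 29, 7, 18, 49, 9, 5, 20, 26, 47, 42, 36, 28, 6, 51, 11, 33, 46, 24, 39, 4, 12, 45, 54, 19,
   32, 15, 8],
   [0, 16, 59, 41, 38, 6, 22, 43, 48, 14, 31, 60, 2, 39, 18, 24, 4, 12, 55, 50, 27, 34, 44, 25, 21,
   8, 17, 54, 47, 1, 29, 56],
   [0, 48, 32, 15, 58, 38, 17, 53, 50, 59, 45, 62, 27, 14, 12, 44, 54, 5, 39, 6, 61, 35, 26, 55,
   20, 42, 46, 37, 56, 60, 10, 40, 4],
   [0, 57, 25, 42, 2, 26, 36, 53, 49, 24, 54, 14, 22, 5, 10, 64, 32, 34, 29, 18, 48, 41, 16, 31,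
   50, 44, 9, 13, 4, 51, 66, 45, 20, 38],
   [0, 43, 34, 8, 55, 35, 58, 40, 63, 54, 66, 4, 46, 26, 39, 52, 12, 37, 9, 68, 61, 67, 28, 45, 33,
   41, 57, 65, 49, 64, 31, 48, 11, 62, 38],
   [0, 12, 51, 13, 59, 26, 11, 33, 35, 5, 62, 40, 47, 31, 68, 45, 22, 25, 7, 55, 48, 67, 44, 42,
   15, 8, 71, 50, 65, 3, 28, 19, 16, 1, 46, 32, 39],
   [0, 28, 40, 15, 57, 64, 43, 24, 54, 49, 74, 36, 11, 58, 29, 67, 20, 39, 68, 70, 12, 60, 35, 53,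
   48, 45, 42, 46, 38, 31, 33, 72, 22, 2, 14, 61, 44, 71],
   [0, 25, 6, 20, 16, 32, 49, 54, 66, 58, 1, 61, 65, 35, 15, 50, 78, 11, 51, 70, 56, 52, 62, 41,
   30, 46, 31, 59, 74, 71, 60, 75, 24, 5, 7, 45, 34, 2, 83, 64, 28, 55, 21, 39],
   [0, 43, 72, 36, 32, 83, 10, 70, 19, 6, 48, 40, 37, 82, 66, 60, 18, 1, 61, 45, 3, 78, 68, 73, 38,
   23, 5, 20, 69, 11, 25, 34, 49, 52, 87, 2, 30, 24, 16, 59, 62, 53, 77, 67, 15],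
   [0, 87, 43, 26, 58, 6, 22, 75, 45, 23, 48, 63, 10, 70, 29, 62, 47, 83, 42, 89, 1, 90, 68, 56,
   37, 19, 8, 57, 36, 13, 65, 20, 44, 38, 53, 74, 61, 11, 2, 88, 16, 9, 52, 50, 34, 72],
   [0, 28, 77, 49, 32, 21, 31, 76, 82, 68, 54, 83, 23, 19, 53, 69, 26, 78, 80, 89, 71, 64, 79, 22,
   58, 81, 91, 20, 3, 9, 51, 45, 55, 63, 7, 75, 14, 41, 25, 61, 73, 8, 60, 62, 4, 10, 42],
   [0, 24, 66, 29, 85, 64, 55, 93, 11, 83, 37, 46, 33, 54, 89, 31, 68, 65, 84, 12, 42, 39, 75, 78,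
   34, 53, 10, 15, 26, 21, 41, 9, 76, 71, 38, 16, 79, 70, 94, 73, 25, 36, 43, 82, 19, 74, 45, 62],
   [0, 60, 52, 40, 95, 61, 96, 19, 38, 42, 65, 90, 84, 27, 31, 80, 11, 69, 2, 79, 5, 59, 13, 26,
   10, 94, 37, 89, 25, 39, 46, 73, 12, 14, 91, 50, 28, 33, 67, 48, 88, 62, 16, 30, 85, 22, 64, 86,
   72],
   [0, 18, 3, 9, 77, 49, 62, 67, 79, 85, 32, 42, 33, 56, 16, 87, 93, 35, 47, 65, 78, 91, 29, 14,
   38, 72, 41, 53, 8, 63, 34, 64, 95, 22, 73, 58, 23, 48, 70, 80, 97, 25, 92, 5, 71, 94, 36, 44,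
   27, 74],
   [0, 66, 11, 39, 8, 73, 5, 92, 40, 29, 27, 36, 64, 84, 97, 81, 46, 4, 98, 63, 99, 74, 55, 47, 21,
   59, 65, 32, 1, 78, 31, 50, 83, 96, 75, 20, 28, 91, 54, 85, 33, 67, 30, 17, 100, 13, 77, 3, 88,
   38, 53],
   [0, 54, 90, 92, 64, 42, 56, 86, 51, 12, 84, 43, 45, 83, 9, 25, 18, 95, 24, 32, 61, 4, 99, 68,
   73, 39, 30, 63, 91, 6, 52, 69, 14, 34, 41, 87, 47, 7, 77, 37, 21, 67, 57, 5, 28, 13, 74, 55, 75,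
   78, 16, 82],
   [0, 33, 13, 90, 10, 79, 73, 23, 52, 31, 3, 42, 54, 37, 21, 2, 55, 12, 81, 76, 88, 93, 32, 84, 9,
   71, 63, 24, 103, 77, 48, 78, 101, 91, 39, 56, 92, 80, 65, 38, 5, 100, 104, 51, 36, 41, 6, 96, 7,
   27, 75, 34, 29],
   [0, 93, 82, 100, 85, 103, 54, 10, 67, 46, 105, 24, 35, 29, 36, 71, 95, 15, 52, 26, 51, 98, 41,
   38, 50, 65, 28, 37, 25, 23, 69, 7, 53, 79, 101, 92, 104, 81, 27, 97, 76, 47, 60, 8, 106, 4, 45,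
   74, 89, 20, 43, 31, 21, 78],
   [0, 7, 35, 14, 44, 46, 98, 76, 102, 81, 64, 41, 91, 12, 63, 70, 42, 10, 71, 9, 30, 65, 24, 90,
   15, 32, 88, 100, 73, 104, 68, 99, 75, 55, 22, 31, 96, 34, 25, 54, 82, 77, 28, 21, 79, 16, 13,
   94, 17, 80, 62, 33, 86, 72, 27],
   [0, 55, 35, 98, 112, 40, 70, 93, 16, 66, 29, 103, 92, 19, 54, 109, 12, 60, 2, 65, 9, 102, 26,
   64, 47, 63, 104, 58, 100, 38, 85, 21, 10, 77, 39, 27, 95, 106, 88, 24, 20, 94, 107, 68, 14, 61,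
   15, 4, 1, 25, 97, 28, 73, 67, 53, 41, 83],
   [0, 52, 43, 6, 27, 65, 42, 57, 100, 90, 4, 112, 64, 69, 80, 99, 51, 72, 9, 15, 85, 38, 20, 114,
   71, 103, 109, 95, 34, 68, 60, 105, 37, 70, 46, 96, 62, 75, 16, 24, 35, 5, 31, 76, 14, 32, 3, 49,
   59, 22, 93, 108, 92, 63, 86, 79, 74, 29],
   [0, 63, 18, 112, 118, 3, 29, 47, 40, 51, 21, 26, 17, 79, 103, 98, 91, 7, 87, 129, 106, 31, 110,
   30, 69, 71, 65, 36, 66, 132, 117, 105, 97, 14, 131, 37, 13, 119, 96, 61, 28, 60, 126, 84, 95,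
   34, 49, 10, 115, 120, 23, 101, 38, 67, 124, 116, 134, 24, 102, 52, 44, 57, 68, 90, 35, 15, 125,
   9],
   [0, 48, 1, 54, 5, 80, 141, 157, 126, 105, 8, 83, 81, 53, 103, 92, 43, 47, 128, 73, 30, 7, 106,
   42, 137, 101, 145, 158, 110, 62, 75, 151, 21, 11, 18, 51, 152, 69, 136, 117, 96, 156, 6, 140,
   111, 153, 149, 134, 10, 22, 33, 58, 115, 27, 19, 129, 146, 70, 64, 90, 40, 102, 132, 16, 4, 46,
   127, 113, 34, 150, 84, 82, 57, 15, 56, 20, 138, 119, 98, 72],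
   [0, 132, 105, 89, 22, 104, 150, 62, 98, 61, 23, 14, 151, 75, 129, 45, 157, 66, 109, 121, 139,
   137, 120, 11, 15, 29, 25, 36, 156, 154, 1, 7, 9, 68, 87, 155, 21, 148, 74, 55, 57, 31, 17, 39,
   144, 103, 122, 128, 32, 113, 117, 96, 4, 26, 69, 126, 19, 125, 153, 2, 147, 93, 136, 141, 58,
   138, 143, 59, 112, 97, 80, 18, 46, 41, 43, 10, 8, 124, 27, 90, 146],
   [0, 80, 148, 32, 50, 66, 160, 70, 113, 139, 152, 76, 37, 34, 92, 21, 56, 7, 162, 31, 93, 5, 129,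
   28, 161, 136, 68, 101, 112, 61, 156, 87, 51, 63, 137, 99, 64, 96, 77, 125, 74, 57, 130, 138, 36,
   90, 12, 149, 79, 111, 54, 46, 105, 123, 13, 65, 45, 59, 18, 86, 117, 98, 153, 78, 75, 158, 141,
   42, 24, 135, 19, 39, 52, 128, 43, 95, 49, 22, 71, 127, 2, 150],
   [0, 51, 91, 56, 154, 16, 129, 127, 10, 78, 44, 75, 58, 95, 143, 153, 32, 90, 17, 82, 35, 152,
   49, 117, 80, 138, 121, 133, 105, 161, 141, 11, 122, 149, 136, 134, 74, 28, 155, 4, 41, 71, 18,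
   101, 1, 22, 5, 144, 20, 125, 33, 108, 126, 43, 61, 29, 148, 79, 68, 150, 89, 92, 99, 142, 162,
   114, 6, 54, 12, 93, 30, 57, 113, 139, 110, 13, 151, 100, 40, 164, 34, 62, 115],
   [0, 164, 70, 157, 105, 80, 33, 89, 151, 126, 147, 69, 141, 44, 160, 125, 46, 37, 165, 52, 61,
   81, 31, 113, 76, 91, 23, 146, 106, 63, 148, 161, 116, 78, 121, 7, 40, 66, 59, 127, 53, 120, 82,
   134, 158, 50, 145, 36, 3, 92, 163, 124, 13, 97, 71, 87, 130, 112, 11, 74, 72, 43, 65, 122, 42,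
   79, 102, 95, 90, 17, 24, 119, 133, 150, 15, 139, 47, 140, 115, 19, 25, 45, 152, 68],
   [0, 71, 64, 10, 112, 104, 36, 108, 165, 23, 21, 102, 126, 158, 53, 125, 128, 33, 62, 60, 143,
   149, 18, 156, 58, 161, 59, 168, 65, 164, 75, 153, 16, 20, 25, 92, 138, 15, 113, 82, 52, 76, 39,
   68, 134, 73, 8, 121, 144, 55, 45, 145, 37, 114, 46, 28, 13, 40, 131, 29, 11, 97, 22, 127, 151,
   123, 152, 105, 119, 50, 7, 27, 6, 34, 142, 49, 56, 85, 154, 69, 66, 110, 147, 51, 140],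
   [0, 25, 172, 102, 164, 144, 152, 115, 47, 86, 27, 130, 133, 117, 62, 147, 15, 168, 85, 94, 23,
   68, 14, 140, 56, 46, 138, 125, 109, 57, 141, 103, 170, 93, 49, 131, 70, 33, 106, 157, 42, 52,
   24, 20, 50, 83, 79, 96, 88, 128, 38, 13, 162, 63, 169, 35, 91, 43, 71, 10, 67, 81, 22, 124, 171,
   92, 163, 34, 110, 113, 155, 21, 123, 118, 82, 16, 154, 150, 53, 8, 74, 28, 156, 136, 114, 104,
   145],
   [0, 126, 114, 161, 117, 90, 105, 40, 5, 59, 147, 35, 159, 6, 80, 47, 154, 86, 123, 17, 51, 113,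
   39, 121, 83, 64, 122, 75, 152, 23, 120, 128, 11, 89, 162, 88, 24, 41, 2, 62, 14, 172, 168, 108,
   101, 30, 137, 33, 118, 167, 124, 79, 135, 10, 98, 65, 149, 60, 78, 81, 50, 169, 139, 72, 42,
   174, 34, 48, 144, 157, 9, 153, 145, 160, 146, 29, 43, 104, 164, 97, 87, 52, 107, 94, 71, 119,
   170, 103],
   [0, 112, 92, 50, 217, 176, 38, 200, 184, 2, 6, 110, 174, 120, 71, 90, 193, 127, 15, 26, 32, 191,
   130, 220, 18, 178, 162, 89, 189, 155, 145, 169, 183, 94, 148, 16, 113, 197, 116, 79, 42, 163,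
   154, 175, 224, 138, 23, 117, 119, 24, 69, 41, 107, 44, 152, 93, 8, 204, 147, 83, 86, 70, 66, 46,
   123, 78, 190, 28, 171, 37, 226, 58, 227, 122, 231, 97, 126, 7, 203, 12, 182, 84, 156, 91, 229,
   143, 72, 124, 205, 45, 230, 108, 106, 129, 137, 1, 95, 151, 221, 199, 125, 36, 170, 186, 208,
   146, 173, 43, 65, 11, 211, 19, 142, 140, 195, 149, 62],
   [0, 91, 73, 123, 152, 162, 1, 171, 198, 103, 93, 221, 196, 37, 53, 49, 154, 113, 203, 46, 145,
   108, 223, 17, 158, 80, 181, 3, 130, 140, 11, 109, 28, 156, 67, 112, 204, 29, 60, 210, 30, 173,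
   5, 74, 14, 151, 207, 213, 161, 199, 186, 125, 174, 122, 134, 208, 58, 40, 18, 180, 184, 220,
   153, 82, 21, 54, 117, 124, 94, 75, 132, 116, 59, 15, 77, 148, 128, 214, 205, 95, 24, 118, 33,
   190, 194, 4, 172, 146, 167, 230, 83, 159, 155, 7, 126, 176, 168, 96, 115, 120, 228, 8, 144, 185,
   139, 13, 88, 32, 25, 225, 87, 219, 23, 50, 175, 164, 84, 63]]

/-- The list has no repetition and avoids the set with bit mask `m`: a test of linear length,
much cheaper for the kernel than the decision procedure of `List.Nodup`. -/
def distinct : List ℕ → ℕ → Bool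
  | [], _ => true
  | x :: l, m => !m.testBit x && distinct l (m ||| 1 <<< x)

theorem nodup_of_distinct (l : List ℕ) (m : ℕ) (h : distinct l m = true) :
    l.Nodup ∧ ∀ x ∈ l, m.testBit x = false := by
  induction l generalizing m with
  | nil => simp
  | cons x l ih =>
    simp only [distinct, Bool.and_eq_true, Bool.not_eq_true'] at h
    obtain ⟨hl, hm⟩ := ih _ h.2
    have hm' : ∀ y ∈ l, m.testBit y = false ∧ y ≠ x := by
      intro y hy
      have := hm y hy
      rw [Nat.testBit_or, Bool.or_eq_false_iff, Nat.testBit_shiftLeft] at this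
      refine ⟨this.1, ?_⟩
      rintro rfl
      simp at this
    refine ⟨List.nodup_cons.2 ⟨fun hx => (hm' x hx).2 rfl, hl⟩, ?_⟩
    intro y hy
    rcases List.mem_cons.1 hy with rfl | hy
    · exact h.1
    · exact (hm' y hy).1

/-- Boolean form of `IsStarter`. -/
def checkStarter (L : List ℕ) : Bool :=
  L.head? == some 0 && L.all (fun c => Nat.blt c (2 * L.length - 1)) && distinct L 0 &&
    distinct ((List.range (2 * L.length - 1)).map fun j =>
      (j + L.getD (min j (2 * L.length - 1 - j)) 0) % (2 * L.length - 1)) 0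

theorem starters_isStarter : ∀ L ∈ starters, IsStarter L := by
  have h : starters.all checkStarter = true := by decide +kernel
  intro L hL
  have hc := List.all_eq_true.1 h L hL
  simp only [checkStarter, Bool.and_eq_true, beq_iff_eq, List.all_eq_true, Nat.blt_eq] at hc
  obtain ⟨⟨⟨h0, hlt⟩, h1⟩, h2⟩ := hc
  exact ⟨h0, hlt, (nodup_of_distinct _ _ h1).1, (nodup_of_distinct _ _ h2).1⟩

/-- Entry `(x, y)` of a table, as an element of `Fin n`. -/
def lookup {n : ℕ} [NeZero n] (T : List (List ℕ)) (x y : ℕ) : Fin n :=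
  Fin.ofNat n ((T.getD x []).getD y 0)

/-- First colouring of a Room square of side `9`, for which no strong starter in `ZMod 9` exists. -/
def roomNineA : List (List ℕ) :=
  [[0, 8, 5, 4, 6, 2, 1, 3, 7],
   [8, 0, 0, 6, 5, 7, 3, 2, 4],
   [5, 0, 0, 1, 7, 6, 8, 4, 3],
   [4, 6, 1, 0, 2, 8, 7, 0, 5],
   [6, 5, 7, 2, 0, 3, 0, 8, 1],
   [2, 7, 6, 8, 3, 0, 4, 1, 0],
   [1, 3, 8, 7, 0, 4, 0, 5, 2],
   [3, 2, 4, 0, 8, 1, 5, 0, 6],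
   [7, 4, 3, 5, 1, 0, 2, 6, 0]]

/-- Second colouring of a Room square of side `9`. -/
def roomNineB : List (List ℕ) :=
  [[0, 7, 3, 5, 8, 4, 2, 1, 6],
   [7, 0, 8, 4, 6, 0, 5, 3, 2],
   [3, 8, 0, 0, 5, 7, 1, 6, 4],
   [5, 4, 0, 0, 1, 6, 8, 2, 7],
   [8, 6, 5, 1, 0, 2, 7, 0, 3],
   [4, 0, 7, 6, 2, 0, 3, 8, 1],
   [2, 5, 1, 8, 7, 3, 0, 4, 0],
   [1, 3, 6, 2, 0, 8, 4, 0, 5],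
   [6, 2, 4, 7, 3, 1, 0, 5, 0]]

theorem room_nine : Room 9 := by
  refine ⟨fun x y => lookup roomNineA x y, fun x y => lookup roomNineB x y, ?_, ?_, ?_, ?_⟩ <;>
    simp only [SimpleGraph.top_adj] <;> decide +kernel

/-- Entry `(x, y)` of a table in which the pair `(k, r)` is encoded as `2 * k + r`. -/
def lookupPair {k : ℕ} [NeZero k] (T : List (List ℕ)) (x y : Fin k × Fin 2) : Fin k × Fin 2 :=
  let c := (T.getD (2 * x.1 + x.2) []).getD (2 * y.1 + y.2) 0
  (Fin.ofNat k (c / 2), Fin.ofNat 2 c)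

/-- First colouring of a Room frame of type `2⁵`. -/
def cocktailFiveA : List (List ℕ) :=
  [[0, 0, 9, 5, 8, 6, 4, 3, 7, 2],
   [0, 0, 4, 8, 7, 9, 2, 5, 3, 6],
   [9, 4, 0, 0, 1, 7, 0, 8, 6, 5],
   [5, 8, 0, 0, 6, 0, 9, 1, 4, 7],
   [8, 7, 1, 6, 0, 0, 3, 9, 2, 0],
   [6, 9, 7, 0, 0, 0, 8, 2, 1, 3],
   [4, 2, 0, 9, 3, 8, 0, 0, 5, 1],
   [3, 5, 8, 1, 9, 2, 0, 0, 0, 4],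
   [7, 3, 6, 4, 2, 1, 5, 0, 0, 0],
   [2, 6, 5, 7, 0, 3, 1, 4, 0, 0]]

/-- Second colouring of a Room frame of type `2⁵`. -/
def cocktailFiveB : List (List ℕ) :=
  [[0, 0, 7, 6, 3, 2, 9, 8, 5, 4],
   [0, 0, 6, 7, 2, 3, 8, 9, 4, 5],
   [7, 6, 0, 0, 9, 8, 5, 4, 1, 0],
   [6, 7, 0, 0, 8, 9, 4, 5, 0, 1],
   [3, 2, 9, 8, 0, 0, 1, 0, 7, 6],
   [2, 3, 8, 9, 0, 0, 0, 1, 6, 7],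
   [9, 8, 5, 4, 1, 0, 0, 0, 3, 2],
   [8, 9, 4, 5, 0, 1, 0, 0, 2, 3],
   [5, 4, 1, 0, 7, 6, 3, 2, 0, 0],
   [4, 5, 0, 1, 6, 7, 2, 3, 0, 0]]

theorem room_cocktail_five : RoomGraph (cocktail (Fin 5)) := by
  refine ⟨lookupPair cocktailFiveA, lookupPair cocktailFiveB, ?_, ?_, ?_, ?_⟩ <;>
    simp only [cocktail, SimpleGraph.comap_adj, SimpleGraph.top_adj] <;> decide +kernel

/-- First colouring of a Room frame of type `2⁶`. -/
def cocktailSixA : List (List ℕ) :=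
  [[0, 0, 4, 9, 7, 10, 3, 11, 2, 6, 5, 8],
   [0, 0, 8, 6, 11, 9, 10, 5, 7, 4, 2, 3],
   [4, 8, 0, 0, 6, 1, 9, 10, 5, 11, 7, 0],
   [9, 6, 0, 0, 0, 8, 11, 1, 10, 7, 4, 5],
   [7, 11, 6, 0, 0, 0, 8, 3, 1, 10, 9, 2],
   [10, 9, 1, 8, 0, 0, 2, 0, 11, 3, 6, 7],
   [3, 10, 9, 11, 8, 2, 0, 0, 0, 5, 1, 4],
   [11, 5, 10, 1, 3, 0, 0, 0, 4, 2, 8, 9],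
   [2, 7, 5, 10, 1, 11, 0, 4, 0, 0, 3, 6],
   [6, 4, 11, 7, 10, 3, 5, 2, 0, 0, 0, 1],
   [5, 2, 7, 4, 9, 6, 1, 8, 3, 0, 0, 0],
   [8, 3, 0, 5, 2, 7, 4, 9, 6, 1, 0, 0]]

/-- Second colouring of a Room frame of type `2⁶`. -/
def cocktailSixB : List (List ℕ) :=
  [[0, 0, 8, 10, 9, 3, 5, 4, 6, 11, 2, 7],
   [0, 0, 11, 4, 8, 7, 9, 3, 10, 2, 5, 6],
   [8, 11, 0, 0, 0, 10, 1, 5, 7, 6, 4, 9],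
   [10, 4, 0, 0, 11, 6, 0, 9, 1, 5, 7, 8],
   [9, 8, 0, 11, 0, 0, 2, 10, 3, 7, 6, 1],
   [3, 7, 10, 6, 0, 0, 11, 8, 2, 1, 9, 0],
   [5, 9, 1, 0, 2, 11, 0, 0, 4, 10, 8, 3],
   [4, 3, 5, 9, 10, 8, 0, 0, 11, 0, 1, 2],
   [6, 10, 7, 1, 3, 2, 4, 11, 0, 0, 0, 5],
   [11, 2, 6, 5, 7, 1, 10, 0, 0, 0, 3, 4],
   [2, 5, 4, 7, 6, 9, 8, 1, 0, 3, 0, 0],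
   [7, 6, 9, 8, 1, 0, 3, 2, 5, 4, 0, 0]]

theorem room_cocktail_six : RoomGraph (cocktail (Fin 6)) := by
  refine ⟨lookupPair cocktailSixA, lookupPair cocktailSixB, ?_, ?_, ?_, ?_⟩ <;>
    simp only [cocktail, SimpleGraph.comap_adj, SimpleGraph.top_adj] <;> decide +kernel

/-! ### The recursive construction -/

/-- Points of a transversal design with five groups of size `m` and a sixth group truncated to
size `w`. -/
abbrev TDPoint (m w : ℕ) : Type := Fin 5 × ZMod m ⊕ Fin w

/-- The group of a point; `none` is the truncated group. -/
def TDPoint.group {m w : ℕ} : TDPoint m w → Option (Fin 5)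
  | .inl p => some p.1
  | .inr _ => none

/-- The block `B = (u, v)` is the line meeting group `k` in `u + k v` and the truncated group
in `v`, if `v` has not been removed. -/
def TDPoint.Inc {m w : ℕ} (B : ZMod m × ZMod m) : TDPoint m w → Prop
  | .inl p => p.2 = B.1 + (p.1 : ℕ) * B.2
  | .inr t => (t : ℕ) = B.2.val

/-- The differences of `0, …, 4` are units modulo `m`, since their prime factors are `2` and `3`. -/
theorem exists_inv_sub {m : ℕ} (hm : m.Coprime 6) {k l : Fin 5} (hkl : k ≠ l) :
    ∃ c : ZMod m, c * ((k : ℕ) - (l : ℕ)) = 1 := by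
  have h2 : IsUnit ((2 : ℕ) : ZMod m) :=
    (ZMod.isUnit_iff_coprime 2 m).2 (Nat.Coprime.coprime_dvd_right (by norm_num) hm).symm
  have h3 : IsUnit ((3 : ℕ) : ZMod m) :=
    (ZMod.isUnit_iff_coprime 3 m).2 (Nat.Coprime.coprime_dvd_right (by norm_num) hm).symm
  obtain ⟨c2, h2⟩ := h2.exists_left_inv
  obtain ⟨c3, h3⟩ := h3.exists_left_inv
  push_cast at h2 h3
  have key : ∀ k l : ℕ, k < l → l < 5 → ∃ c : ZMod m, c * ((k : ZMod m) - l) = 1 := by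
    intro k l hkl hl
    obtain ⟨d, rfl⟩ := Nat.exists_eq_add_of_lt hkl
    have hd : d < 4 := by omega
    interval_cases d
    · exact ⟨-1, by push_cast; ring⟩
    · exact ⟨-c2, by push_cast; linear_combination h2⟩
    · exact ⟨-c3, by push_cast; linear_combination h3⟩
    · exact ⟨-(c2 * c2), by push_cast; linear_combination (2 * c2 + 1) * h2⟩
  rcases lt_or_gt_of_ne hkl with h | h
  · exact key k l h l.2
  · obtain ⟨c, hc⟩ := key l k h k.2
    exact ⟨-c, by linear_combination hc⟩

theorem TDPoint.exists_block {m w : ℕ} [NeZero m] (hm : m.Coprime 6) (hw : w ≤ m)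
    {p q : TDPoint m w} (hpq : p.group ≠ q.group) : ∃ B, p.Inc B ∧ q.Inc B := by
  have hval : ∀ t : Fin w, ((t : ℕ) : ZMod m).val = t := fun t =>
    ZMod.val_cast_of_lt (t.2.trans_le hw)
  rcases p with ⟨k, x⟩ | t <;> rcases q with ⟨l, y⟩ | s
  · have hkl : k ≠ l := fun h => hpq (by simp [TDPoint.group, h])
    obtain ⟨c, hc⟩ := exists_inv_sub hm hkl
    refine ⟨(x - (k : ℕ) * (c * (x - y)), c * (x - y)), ?_, ?_⟩
    · simp [TDPoint.Inc]
    · simp only [TDPoint.Inc]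
      linear_combination (x - y) * hc
  · exact ⟨(x - (k : ℕ) * (s : ℕ), (s : ℕ)), by simp [TDPoint.Inc], by simp [TDPoint.Inc, hval]⟩
  · exact ⟨(y - (l : ℕ) * (t : ℕ), (t : ℕ)), by simp [TDPoint.Inc, hval], by simp [TDPoint.Inc]⟩
  · exact absurd rfl hpq

theorem TDPoint.block_unique {m w : ℕ} [NeZero m] (hm : m.Coprime 6)
    {p q : TDPoint m w} (hpq : p.group ≠ q.group) {B C : ZMod m × ZMod m}
    (hpB : p.Inc B) (hqB : q.Inc B) (hpC : p.Inc C) (hqC : q.Inc C) : B = C := by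
  obtain ⟨u, v⟩ := B
  obtain ⟨u', v'⟩ := C
  rcases p with ⟨k, x⟩ | t <;> rcases q with ⟨l, y⟩ | s <;> simp only [TDPoint.Inc] at *
  · have hkl : k ≠ l := fun h => hpq (by simp [TDPoint.group, h])
    obtain ⟨c, hc⟩ := exists_inv_sub hm hkl
    have hv : v = v' := by
      linear_combination c * (hqB - hqC - hpB + hpC) - (v - v') * hc
    subst hv
    exact Prod.ext (by simp only; linear_combination hpC - hpB) rfl
  · have hv : v = v' := ZMod.val_injective m (hqB.symm.trans hqC)
    subst hv
    exact Prod.ext (by simp only; linear_combination hpC - hpB) rfl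
  · have hv : v = v' := ZMod.val_injective m (hpB.symm.trans hpC)
    subst hv
    exact Prod.ext (by simp only; linear_combination hqC - hqB) rfl
  · exact absurd rfl hpq

theorem TDPoint.group_ne {m w : ℕ} {p q : TDPoint m w} {B : ZMod m × ZMod m}
    (hp : p.Inc B) (hq : q.Inc B) (hpq : p ≠ q) : p.group ≠ q.group := by
  rintro h
  apply hpq
  rcases p with ⟨k, x⟩ | t <;> rcases q with ⟨l, y⟩ | s <;>
    simp only [TDPoint.Inc, TDPoint.group, Option.some.injEq, reduceCtorEq] at *
  · subst h
    rw [hp, hq]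
  · rw [Fin.ext (hp.trans hq.symm)]

/-- Every point `p` of the design is doubled to `(p, 0)`, `(p, 1)`, and `none` is a point at
infinity that is counted in every group. -/
def InGroup {m w : ℕ} (i : Option (Fin 5)) : Option (TDPoint m w × Fin 2) → Prop
  | none => True
  | some p => p.1.group = i

/-- The complete graph on the doubled group `i` together with infinity. -/
def groupGraph (m w : ℕ) (i : Option (Fin 5)) : SimpleGraph (Option (TDPoint m w × Fin 2)) where
  Adj x y := x ≠ y ∧ InGroup i x ∧ InGroup i y
  symm := ⟨fun _ _ h => ⟨h.1.symm, h.2.2, h.2.1⟩⟩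
  loopless := ⟨fun _ h => h.1 rfl⟩

/-- The complete multipartite graph on the doubled points of the block `B`, whose parts are the
pairs `{(p, 0), (p, 1)}`. -/
def blockGraph (m w : ℕ) (B : ZMod m × ZMod m) :
    SimpleGraph (Option (TDPoint m w × Fin 2)) where
  Adj x y := ∃ p q : TDPoint m w × Fin 2, x = some p ∧ y = some q ∧ p.1 ≠ q.1 ∧
    p.1.Inc B ∧ q.1.Inc B
  symm := ⟨fun _ _ ⟨p, q, hx, hy, hpq, hp, hq⟩ => ⟨q, p, hy, hx, hpq.symm, hq, hp⟩⟩
  loopless := ⟨fun _ ⟨p, q, hx, hy, hpq, _⟩ => hpq (by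
    rw [Option.some.inj (hx.symm.trans hy)])⟩

theorem room_groupGraph {m w : ℕ} [NeZero m] (h1 : Room (2 * m + 1)) (h2 : Room (2 * w + 1))
    (i : Option (Fin 5)) : RoomGraph (groupGraph m w i) := by
  cases i with
  | none =>
    have h : RoomGraph (⊤ : SimpleGraph (Option (Fin w × Fin 2))) :=
      h2.top (by simp [mul_comm])
    have hinj : Function.Injective (fun p : Fin w × Fin 2 => ((Sum.inr p.1 : TDPoint m w), p.2)) := by
      rintro ⟨t, r⟩ ⟨t', r'⟩ h
      simpa using h
    refine h.transport (Option.map fun p => (Sum.inr p.1, p.2)) (Option.map_injective hinj) ?_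
    intro x y
    constructor
    · rintro ⟨hne, hx, hy⟩
      have hr : ∀ x : Option (TDPoint m w × Fin 2), InGroup none x →
          ∃ x', Option.map (fun p : Fin w × Fin 2 => ((Sum.inr p.1 : TDPoint m w), p.2)) x' = x := by
        rintro (_ | ⟨⟨k, x⟩ | t, r⟩) hx
        · exact ⟨none, rfl⟩
        · simp [InGroup, TDPoint.group] at hx
        · exact ⟨some (t, r), rfl⟩
      obtain ⟨x', rfl⟩ := hr x hx
      obtain ⟨y', rfl⟩ := hr y hy
      exact ⟨x', y', fun h => hne (by rw [h]), rfl, rfl⟩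
    · rintro ⟨x', y', hne, rfl, rfl⟩
      refine ⟨fun h => hne (Option.map_injective hinj h), ?_, ?_⟩
      · cases x' <;> simp [InGroup, TDPoint.group]
      · cases y' <;> simp [InGroup, TDPoint.group]
  | some k =>
    have h : RoomGraph (⊤ : SimpleGraph (Option (ZMod m × Fin 2))) :=
      h1.top (by simp [mul_comm, ZMod.card])
    have hinj : Function.Injective
        (fun p : ZMod m × Fin 2 => ((Sum.inl (k, p.1) : TDPoint m w), p.2)) := by
      rintro ⟨t, r⟩ ⟨t', r'⟩ h
      simpa using h
    refine h.transport (Option.map fun p => (Sum.inl (k, p.1), p.2))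
      (Option.map_injective hinj) ?_
    intro x y
    constructor
    · rintro ⟨hne, hx, hy⟩
      have hr : ∀ x : Option (TDPoint m w × Fin 2), InGroup (some k) x →
          ∃ x', Option.map
            (fun p : ZMod m × Fin 2 => ((Sum.inl (k, p.1) : TDPoint m w), p.2)) x' = x := by
        rintro (_ | ⟨⟨l, x⟩ | t, r⟩) hx
        · exact ⟨none, rfl⟩
        · simp only [InGroup, TDPoint.group, Option.some.injEq] at hx
          subst hx
          exact ⟨some (x, r), rfl⟩
        · simp [InGroup, TDPoint.group] at hx
      obtain ⟨x', rfl⟩ := hr x hx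
      obtain ⟨y', rfl⟩ := hr y hy
      exact ⟨x', y', fun h => hne (by rw [h]), rfl, rfl⟩
    · rintro ⟨x', y', hne, rfl, rfl⟩
      refine ⟨fun h => hne (Option.map_injective hinj h), ?_, ?_⟩
      · cases x' <;> simp [InGroup, TDPoint.group]
      · cases y' <;> simp [InGroup, TDPoint.group]

/-- `f` enumerates the points of the block `B`. -/
theorem RoomGraph.block {m w : ℕ} {B : ZMod m × ZMod m} {K : Type*}
    (h : RoomGraph (cocktail K)) (f : K → TDPoint m w) (hf : Function.Injective f)
    (hB : ∀ p : TDPoint m w, p.Inc B ↔ ∃ k, f k = p) : RoomGraph (blockGraph m w B) := by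
  refine h.transport (fun p => some (f p.1, p.2)) ?_ ?_
  · rintro ⟨k, r⟩ ⟨l, s⟩ h
    simp only [Option.some.injEq, Prod.mk.injEq] at h
    rw [hf h.1, h.2]
  · intro x y
    constructor
    · rintro ⟨⟨p, r⟩, ⟨q, s⟩, rfl, rfl, hpq, hp, hq⟩
      obtain ⟨k, rfl⟩ := (hB p).1 hp
      obtain ⟨l, rfl⟩ := (hB q).1 hq
      exact ⟨(k, r), (l, s), fun h => hpq (congrArg f h), rfl, rfl⟩
    · rintro ⟨⟨k, r⟩, ⟨l, s⟩, hkl, rfl, rfl⟩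
      exact ⟨_, _, rfl, rfl, fun h => hkl (hf h), (hB _).2 ⟨k, rfl⟩, (hB _).2 ⟨l, rfl⟩⟩

/-- A block has six or five points, depending on whether its point in the sixth group survives
the truncation. -/
theorem room_blockGraph (m w : ℕ) (B : ZMod m × ZMod m) : RoomGraph (blockGraph m w B) := by
  obtain ⟨u, v⟩ := B
  by_cases hv : v.val < w
  · have h : RoomGraph (cocktail (Option (Fin 5))) :=
      room_cocktail_six.cocktail_congr (finSuccEquiv 5)
    refine h.block (fun k => k.elim (Sum.inr ⟨v.val, hv⟩)
      fun k => Sum.inl (k, u + (k : ℕ) * v)) ?_ ?_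
    · rintro (_ | k) (_ | l) h <;> simp_all
    · rintro (⟨k, x⟩ | t)
      · simp only [TDPoint.Inc]
        constructor
        · rintro rfl
          exact ⟨some k, rfl⟩
        · rintro ⟨_ | l, hl⟩
          · simp at hl
          · simp only [Option.elim_some, Sum.inl.injEq, Prod.mk.injEq] at hl
            rw [← hl.1, ← hl.2]
      · simp only [TDPoint.Inc]
        constructor
        · intro h
          exact ⟨none, by simp [← h]⟩
        · rintro ⟨_ | l, hl⟩
          · simp only [Option.elim_none, Sum.inr.injEq] at hl
            rw [← hl]
          · simp at hl
  · refine room_cocktail_five.block (fun k => Sum.inl (k, u + (k : ℕ) * v)) ?_ ?_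
    · intro k l h
      simp only [Sum.inl.injEq, Prod.mk.injEq] at h
      exact h.1
    · rintro (⟨k, x⟩ | t)
      · simp only [TDPoint.Inc, Sum.inl.injEq, Prod.mk.injEq]
        constructor
        · rintro rfl
          exact ⟨k, rfl, rfl⟩
        · rintro ⟨l, rfl, rfl⟩
          rfl
      · simp only [TDPoint.Inc, reduceCtorEq, exists_const, iff_false]
        intro h
        exact hv (h ▸ t.2)

/-- Every pair of distinct elements of `Option (TDPoint m w × Fin 2)` lies either in exactly one
group graph or in exactly one block graph, so that the Room frames on these glue together. -/
theorem room_step {m w : ℕ} (hm0 : m ≠ 0) (hm : m.Coprime 6) (hw : w ≤ m)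
    (h1 : Room (2 * m + 1)) (h2 : Room (2 * w + 1)) : Room (2 * (5 * m + w) + 1) := by
  have : NeZero m := ⟨hm0⟩
  have main : RoomGraph (⊤ : SimpleGraph (Option (TDPoint m w × Fin 2))) := by
    refine RoomGraph.glue (ι := Option (Fin 5) ⊕ ZMod m × ZMod m)
      (Sum.elim (groupGraph m w) (blockGraph m w)) ?_ ?_ ?_
    · rintro (i | B)
      · exact room_groupGraph h1 h2 i
      · exact room_blockGraph m w B
    · intro x y
      refine ⟨fun hxy => ?_, fun ⟨i, hi⟩ => hi.ne⟩
      rw [SimpleGraph.top_adj] at hxy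
      rcases x with _ | p <;> rcases y with _ | q
      · exact absurd rfl hxy
      · exact ⟨.inl q.1.group, hxy, trivial, rfl⟩
      · exact ⟨.inl p.1.group, hxy, rfl, trivial⟩
      · by_cases hpq : p.1.group = q.1.group
        · exact ⟨.inl q.1.group, hxy, hpq, rfl⟩
        · obtain ⟨B, hp, hq⟩ := TDPoint.exists_block hm hw hpq
          exact ⟨.inr B, p, q, rfl, rfl, fun h => hpq (by rw [h]), hp, hq⟩
    · have hmix : ∀ i B x y, (groupGraph m w i).Adj x y → (blockGraph m w B).Adj x y → False := by
        rintro i B _ _ ⟨-, hx, hy⟩ ⟨p, q, rfl, rfl, hpq, hp, hq⟩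
        exact TDPoint.group_ne hp hq hpq (hx.trans hy.symm)
      rintro (i | B) (j | C) x y hi hj
      · obtain ⟨hne, hx, hy⟩ := hi
        obtain ⟨-, hx', hy'⟩ := hj
        rcases x with _ | p
        · rcases y with _ | q
          · exact absurd rfl hne
          · exact congrArg _ (hy.symm.trans hy')
        · exact congrArg _ (hx.symm.trans hx')
      · exact (hmix _ _ _ _ hi hj).elim
      · exact (hmix _ _ _ _ hj hi).elim
      · obtain ⟨p, q, rfl, rfl, hpq, hp, hq⟩ := hi
        obtain ⟨p', q', hp', hq', -, hpC, hqC⟩ := hj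
        obtain rfl := Option.some.inj hp'
        obtain rfl := Option.some.inj hq'
        exact congrArg _ (TDPoint.block_unique hm (TDPoint.group_ne hp hq hpq) hp hq hpC hqC)
  have hcard : Fintype.card (Option (TDPoint m w × Fin 2)) = 2 * (5 * m + w) + 1 := by
    simp [ZMod.card, mul_comm]
  have e := Fintype.equivFinOfCardEq hcard
  refine main.transport e e.injective fun x y => ?_
  constructor
  · intro hxy
    exact ⟨e.symm x, e.symm y, by simpa using hxy, by simp, by simp⟩
  · rintro ⟨x, y, hxy, rfl, rfl⟩
    simpa using hxy

/-! ### Room squares of every odd side at least seven -/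

/-- Every `N` outside the table is `5 m + w` with parameters suitable for `room_step`. For large
`N`, the multiplier `m ≡ 1 (mod 6)` is chosen with `3 ≤ w ≤ 32`. -/
theorem exists_split {N : ℕ} (hN : 3 ≤ N) (h4 : N ≠ 4)
    (hs : N ∉ starters.map fun L => L.length - 1) :
    ∃ m w, N = 5 * m + w ∧ m.Coprime 6 ∧ w ≤ m ∧ (w = 0 ∨ 3 ≤ w) ∧ 3 ≤ m := by
  by_cases hlarge : 192 ≤ N
  · refine ⟨6 * ((N - 8) / 30) + 1, N - 5 * (6 * ((N - 8) / 30) + 1), by omega, ?_, by omega,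
      by omega, by omega⟩
    rw [Nat.coprime_mul_left_add_left]
    exact Nat.coprime_one_left 6
  · have key : ∀ N ∈ Finset.range 192, 3 ≤ N → N ≠ 4 → N ∉ (starters.map fun L => L.length - 1) →
        ∃ m ∈ Finset.range 36, 5 * m ≤ N ∧ m.gcd 6 = 1 ∧ N - 5 * m ≤ m ∧
          (N - 5 * m = 0 ∨ 3 ≤ N - 5 * m) ∧ 3 ≤ m := by
      decide +kernel
    obtain ⟨m, -, h1, h2, h3, h4, h5⟩ := key N (Finset.mem_range.2 (by omega)) hN h4 hs
    exact ⟨m, N - 5 * m, by omega, h2, h3, h4, h5⟩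

theorem room_odd (N : ℕ) (hN : 3 ≤ N) : Room (2 * N + 1) := by
  induction N using Nat.strong_induction_on with
  | _ N ih =>
    by_cases h4 : N = 4
    · subst h4
      exact room_nine
    by_cases hs : N ∈ starters.map fun L => L.length - 1
    · obtain ⟨L, hL, rfl⟩ := List.mem_map.1 hs
      exact room_of_starter (starters_isStarter L hL) (by omega)
    obtain ⟨m, w, rfl, hm, hwm, hw, hm3⟩ := exists_split hN h4 hs
    refine room_step (by omega) hm hwm (ih m (by omega) hm3) ?_
    rcases hw with rfl | hw
    · exact room_one
    · exact ih w (by omega) hw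

/-! ### Orthogonal edge colourings of complete graphs -/

/-- `a` and `b` are orthogonal proper edge colourings of the complete graph on `V` with colours
in `C`: two edges that share a vertex have different colours in both, and an edge is determined
by its pair of colours. Values on the diagonal are irrelevant. -/
structure IsOrthColouring {V C : Type*} (a b : V → V → C) : Prop where
  comm : ∀ x y, x ≠ y → a x y = a y x ∧ b x y = b y x
  inj : ∀ x y z, x ≠ y → x ≠ z → a x y = a x z ∨ b x y = b x z → y = z
  orth : ∀ x y z w, x ≠ y → z ≠ w → a x y = a z w → b x y = b z w →
    (x = z ∧ y = w) ∨ (x = w ∧ y = z)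

/-- The new vertex `none` is joined to `x` by an edge whose two colours are both `x`. -/
theorem exists_orthColouring_even {n : ℕ} (h : Room n) :
    ∃ a b : Option (Fin n) → Option (Fin n) → Option (Fin n), IsOrthColouring a b := by
  obtain ⟨a, b, h⟩ := h
  let ext (c : Fin n → Fin n → Fin n) : Option (Fin n) → Option (Fin n) → Option (Fin n)
    | none, y => y
    | x, none => x
    | some x, some y => some (c x y)
  have hs : ∀ c x y, ext c (some x) (some y) = some (c x y) := fun c x y => rfl
  have hn : ∀ c y, ext c none y = y := fun c y => by cases y <;> rfl
  have hn' : ∀ c y, ext c y none = y := fun c y => by cases y <;> rfl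
  have hc := h.comm
  have hadj := h.adj
  have hinj := h.inj
  have ho := h.orth
  simp only [SimpleGraph.top_adj] at hc hadj hinj ho
  clear h
  clear_value ext
  refine ⟨ext a, ext b, ?_, ?_, ?_⟩
  · rintro (_ | x) (_ | y) hxy <;>
      simp only [hs, hn, hn', ne_eq, Option.some.injEq, reduceCtorEq, not_true_eq_false] at * <;>
      grind
  · rintro (_ | x) (_ | y) (_ | z) hxy hxz <;>
      simp only [hs, hn, hn', ne_eq, Option.some.injEq, reduceCtorEq, not_true_eq_false] at * <;>
      grind
  · rintro (_ | x) (_ | y) (_ | z) (_ | w) hxy hzw <;>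
      simp only [hs, hn, hn', ne_eq, Option.some.injEq, reduceCtorEq, not_true_eq_false] at * <;>
      grind

theorem exists_orthColouring (v : ℕ) (h1 : 2 ≤ v) (h3 : v ≠ 3) (h4 : v ≠ 4) (h5 : v ≠ 5)
    (h6 : v ≠ 6) : ∃ a b : Fin v → Fin v → Fin v, IsOrthColouring a b := by
  by_cases h2 : v = 2
  · subst h2
    exact ⟨fun _ _ => 0, fun _ _ => 0, by constructor <;> decide⟩
  rcases Nat.even_or_odd' v with ⟨N, rfl | rfl⟩
  · obtain ⟨N, rfl⟩ : ∃ M, N = M + 1 := ⟨N - 1, by omega⟩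
    obtain ⟨a, b, h⟩ := exists_orthColouring_even (room_odd N (by omega))
    let e : Fin (2 * (N + 1)) ≃ Option (Fin (2 * N + 1)) := finSuccEquiv (2 * N + 1)
    refine ⟨fun x y => e.symm (a (e x) (e y)), fun x y => e.symm (b (e x) (e y)), ?_, ?_, ?_⟩
    · intro x y hxy
      have := h.comm (e x) (e y) (by simpa using hxy)
      simpa using this
    · intro x y z hxy hxz
      have := h.inj (e x) (e y) (e z) (by simpa using hxy) (by simpa using hxz)
      simpa using this
    · intro x y z w hxy hzw
      have := h.orth (e x) (e y) (e z) (e w) (by simpa using hxy) (by simpa using hzw)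
      simpa using this
  · obtain ⟨a, b, h⟩ := room_odd N (by omega)
    exact ⟨a, b, h.comm, h.inj, h.orth⟩

/-! ### Packings -/

/-- The two decidability instances are free, so that it applies to filters elaborated
with different ones. -/
theorem card_filter_mono {α : Type*} (P : Multiset α) {p q : α → Prop} {ip : DecidablePred p}
    {iq : DecidablePred q} (h : ∀ x, p x → q x) :
    Multiset.card (P.filter p) ≤ Multiset.card (P.filter q) :=
  Multiset.card_le_card (Multiset.monotone_filter_right P h)

/-- A pair of points of `X₁` lies in at most one block, and each block contains exactly one such
pair, so there are at most `C(v₁, 2)` blocks. -/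
theorem card_le_of_isGenPacking {v₁ v₂ v₃ : ℕ}
    {P : Multiset (∀ i : Fin 3, Finset (Fin (![v₁, v₂, v₃] i)))}
    (hP : IsGenPacking 2 1 ![v₁, v₂, v₃] ![2, 1, 1] P) : Multiset.card P ≤ v₁.choose 2 := by
  obtain ⟨hcard, hpack⟩ := hP
  let g : (∀ i : Fin 3, Finset (Fin (![v₁, v₂, v₃] i))) → Finset (Fin v₁) := fun B => B 0
  let Q : Multiset (Finset (Fin v₁)) := P.map g
  have hmem : ∀ A ∈ Q, A.card = 2 := by
    intro A hA
    obtain ⟨B, hB, rfl⟩ := Multiset.mem_map.1 hA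
    exact hcard B hB 0
  have hnodup : Q.Nodup := by
    rw [Multiset.nodup_iff_count_le_one]
    intro A
    by_cases hA : A ∈ Q
    · let T : ∀ i : Fin 3, Finset (Fin (![v₁, v₂, v₃] i)) := fun i =>
        match i with
        | 0 => A
        | 1 => ∅
        | 2 => ∅
      have h := hpack ![2, 0, 0] (by decide) (by decide) T (by
        intro i
        fin_cases i
        · exact hmem A hA
        · rfl
        · rfl)
      refine (Multiset.count_map g P A).trans_le
        (le_trans (card_filter_mono P ?_) h)
      intro B hB i
      fin_cases i
      · exact hB.subset
      · exact Finset.empty_subset _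
      · exact Finset.empty_subset _
    · rw [Multiset.count_eq_zero_of_notMem hA]
      exact zero_le_one
  have hsub : (⟨Q, hnodup⟩ : Finset (Finset (Fin v₁))) ⊆ Finset.powersetCard 2 Finset.univ := by
    intro A hA
    exact Finset.mem_powersetCard.2 ⟨Finset.subset_univ _, hmem A hA⟩
  have := Finset.card_le_card hsub
  rw [Finset.card_powersetCard, Finset.card_univ, Fintype.card_fin] at this
  exact (Multiset.card_map g P).symm.trans_le this

theorem card_filter_le_one {α β : Type*} (s : Finset α) (f : α → β) (p : β → Prop)
    {inst : DecidablePred p} (h : ∀ x ∈ s, ∀ y ∈ s, p (f x) → p (f y) → x = y) :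
    Multiset.card ((s.val.map f).filter p) ≤ 1 := by
  rw [Multiset.filter_map, Multiset.card_map, ← Finset.filter_val, Finset.card_val,
    Finset.card_le_one]
  intro x hx y hy
  simp only [Finset.mem_filter, Function.comp] at hx hy
  exact h x hx.1 y hy.1 hx.2 hy.2

/-- The block `({x, y}, {a x y}, {b x y})` of the edge `e = xy`, the colours being embedded into
`X₂` and `X₃`. -/
def edgeBlock {v₁ v₂ v₃ : ℕ} (a b : Fin v₁ → Fin v₁ → Fin v₁) (h12 : v₁ ≤ v₂) (h13 : v₁ ≤ v₃)
    (e : Fin v₁ × Fin v₁) : ∀ i : Fin 3, Finset (Fin (![v₁, v₂, v₃] i)) := fun i =>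
  match i with
  | 0 => ({e.1, e.2} : Finset (Fin v₁))
  | 1 => ({Fin.castLE h12 (a e.1 e.2)} : Finset (Fin v₂))
  | 2 => ({Fin.castLE h13 (b e.1 e.2)} : Finset (Fin v₃))

/-- The edges of the complete graph on `Fin v`, each listed once as `(x, y)` with `x < y`. -/
def edgeSet (v : ℕ) : Finset (Fin v × Fin v) := Finset.univ.filter fun e => e.1 < e.2

theorem card_edgeSet (v : ℕ) : (edgeSet v).card = v.choose 2 := by
  have hp : (Finset.powersetCard 2 (Finset.univ : Finset (Fin v))).card = v.choose 2 := by
    rw [Finset.card_powersetCard, Finset.card_univ, Fintype.card_fin]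
  rw [← hp, edgeSet]
  refine Finset.card_bij (fun e _ => {e.1, e.2}) ?_ ?_ ?_
  · rintro ⟨x, y⟩ h
    simp only [Finset.mem_filter] at h
    exact Finset.mem_powersetCard.2 ⟨Finset.subset_univ _, Finset.card_pair h.2.ne⟩
  · rintro ⟨x, y⟩ h ⟨z, w⟩ h' he
    simp only [Finset.mem_filter] at h h'
    have h1 := congrArg (x ∈ ·) he
    have h2 := congrArg (y ∈ ·) he
    simp at h1 h2
    grind
  · intro A hA
    obtain ⟨x, y, hxy, rfl⟩ := Finset.card_eq_two.1 (Finset.mem_powersetCard.1 hA).2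
    rcases lt_or_gt_of_ne hxy with h | h
    · exact ⟨(x, y), by simpa using h, rfl⟩
    · exact ⟨(y, x), by simpa using h, Finset.pair_comm _ _⟩

theorem isGenPacking_edgeBlock {v₁ v₂ v₃ : ℕ} {a b : Fin v₁ → Fin v₁ → Fin v₁}
    (h : IsOrthColouring a b) (h12 : v₁ ≤ v₂) (h13 : v₁ ≤ v₃) :
    IsGenPacking 2 1 ![v₁, v₂, v₃] ![2, 1, 1]
      ((edgeSet v₁).val.map (edgeBlock a b h12 h13)) := by
  have hedge : ∀ e ∈ edgeSet v₁, e.1 < e.2 := fun e he => (Finset.mem_filter.1 he).2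
  constructor
  · intro B hB i
    obtain ⟨e, he, rfl⟩ := Multiset.mem_map.1 hB
    fin_cases i
    · exact Finset.card_pair (hedge e he).ne
    · exact Finset.card_singleton _
    · exact Finset.card_singleton _
  · intro t ht hsum T hT
    apply card_filter_le_one
    intro e he e' he' hTe hTe'
    have hlt' := hedge e' he'
    have hlt := hedge e he
    -- a point of `T 1` or `T 2` pins the corresponding colour
    have ha : t 1 = 1 → a e.1 e.2 = a e'.1 e'.2 := by
      intro h1
      obtain ⟨c, hc⟩ := Finset.card_pos.1 (show 0 < (T 1).card by rw [hT 1, h1]; exact one_pos)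
      have h1 := Finset.mem_singleton.1 (hTe 1 hc)
      have h2 := Finset.mem_singleton.1 (hTe' 1 hc)
      exact Fin.castLE_injective h12 (h1.symm.trans h2)
    have hb : t 2 = 1 → b e.1 e.2 = b e'.1 e'.2 := by
      intro h1
      obtain ⟨c, hc⟩ := Finset.card_pos.1 (show 0 < (T 2).card by rw [hT 2, h1]; exact one_pos)
      have h1 := Finset.mem_singleton.1 (hTe 2 hc)
      have h2 := Finset.mem_singleton.1 (hTe' 2 hc)
      exact Fin.castLE_injective h13 (h1.symm.trans h2)
    have hshare : t 0 = 1 → ∃ x, (x = e.1 ∨ x = e.2) ∧ (x = e'.1 ∨ x = e'.2) := by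
      intro h1
      obtain ⟨c, hc⟩ := Finset.card_pos.1 (show 0 < (T 0).card by rw [hT 0, h1]; exact one_pos)
      have key : ∀ x : Fin v₁, x ∈ ({e.1, e.2} : Finset (Fin v₁)) →
          x ∈ ({e'.1, e'.2} : Finset (Fin v₁)) →
          ∃ x, (x = e.1 ∨ x = e.2) ∧ (x = e'.1 ∨ x = e'.2) := fun x h1 h2 =>
        ⟨x, by simpa using h1, by simpa using h2⟩
      exact key c (hTe 0 hc) (hTe' 0 hc)
    have hpoint : t 0 = 1 → (a e.1 e.2 = a e'.1 e'.2 ∨ b e.1 e.2 = b e'.1 e'.2) → e = e' := by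
      intro h0 hab
      obtain ⟨x, hx, hx'⟩ := hshare h0
      obtain ⟨p, q⟩ := e
      obtain ⟨p', q'⟩ := e'
      simp only at *
      have c1 := h.comm p q hlt.ne
      have c2 := h.comm p' q' hlt'.ne
      rcases hx with rfl | rfl <;> rcases hx' with rfl | rfl
      · rw [h.inj _ _ _ hlt.ne hlt'.ne hab]
      · rw [c2.1, c2.2] at hab
        have := h.inj _ _ _ hlt.ne hlt'.ne' hab
        omega
      · rw [c1.1, c1.2] at hab
        have := h.inj _ _ _ hlt.ne' hlt'.ne hab
        omega
      · rw [c1.1, c1.2, c2.1, c2.2] at hab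
        rw [h.inj _ _ _ hlt.ne' hlt'.ne' hab]
    have hsum' : t 0 + t 1 + t 2 = 2 := (Fin.sum_univ_three t).symm.trans hsum
    have ht0 : t 0 ≤ 2 := ht 0
    have ht1 : t 1 ≤ 1 := ht 1
    have ht2 : t 2 ≤ 1 := ht 2
    obtain h0 | ⟨h0, h1⟩ | ⟨h0, h2⟩ | ⟨h1, h2⟩ : t 0 = 2 ∨ (t 0 = 1 ∧ t 1 = 1) ∨
        (t 0 = 1 ∧ t 2 = 1) ∨ (t 1 = 1 ∧ t 2 = 1) := by omega
    · have hc : ∀ S A : Finset (Fin v₁), S.card = 2 → A.card = 2 → S ⊆ A → S = A :=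
        fun S A hS hA hSA => Finset.eq_of_subset_of_card_le hSA (by rw [hA, hS])
      have h1 := hc (T 0) {e.1, e.2} ((hT 0).trans h0) (Finset.card_pair hlt.ne) (hTe 0)
      have h2 := hc (T 0) {e'.1, e'.2} ((hT 0).trans h0) (Finset.card_pair hlt'.ne) (hTe' 0)
      have h3 : ({e.1, e.2} : Finset (Fin v₁)) = {e'.1, e'.2} := h1.symm.trans h2
      have m1 : e.1 ∈ ({e'.1, e'.2} : Finset (Fin v₁)) := h3 ▸ by simp
      have m2 : e.2 ∈ ({e'.1, e'.2} : Finset (Fin v₁)) := h3 ▸ by simp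
      simp only [Finset.mem_insert, Finset.mem_singleton] at m1 m2
      ext <;> omega
    · exact hpoint h0 (Or.inl (ha h1))
    · exact hpoint h0 (Or.inr (hb h2))
    · rcases h.orth _ _ _ _ hlt.ne hlt'.ne (ha h1) (hb h2) with h | h
      · exact Prod.ext h.1 h.2
      · exact absurd hlt (by rw [h.1, h.2]; exact hlt'.not_gt)

/-- for `𝐯 = (v₁,v₂,v₃)` with `v₁ ≤ v₂ ≤ v₃`, `v₁ ∉ {3,4,5,6}` and
`𝐤 = (2,1,1)`, `D(𝐯,𝐤,2) = C(v₁,2)`. -/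
theorem stmt14 (v₁ v₂ v₃ : ℕ) (h1 : 2 ≤ v₁) (h12 : v₁ ≤ v₂) (h23 : v₂ ≤ v₃)
    (h3 : v₁ ≠ 3) (h4 : v₁ ≠ 4) (h5 : v₁ ≠ 5) (h6 : v₁ ≠ 6) :
    genPackingNumber (Fin 3) 2 1 ![v₁, v₂, v₃] ![2, 1, 1] = v₁.choose 2 := by
  obtain ⟨a, b, hab⟩ := exists_orthColouring v₁ h1 h3 h4 h5 h6
  refine IsGreatest.csSup_eq ⟨⟨_, isGenPacking_edgeBlock hab h12 (h12.trans h23), ?_⟩, ?_⟩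
  · rw [Multiset.card_map, Finset.card_val, card_edgeSet]
  · rintro N ⟨P, hP, rfl⟩
    exact card_le_of_isGenPacking hP
end

section
/- Let 𝐯 = (5,v₂,v₃) with 5 ≤ v₂ ≤ v₃ and 𝐤 = (2,1,1). Then D(𝐯,𝐤,2) = 9 if (v₂,v₃) = (5,5), and D(𝐯,𝐤,2) = 10 otherwise. -/
/-!
A `2`-`((5,v₂,v₃),(2,1,1),1)` generalized packing is a set of distinct edges of `K₅` carrying two
proper edge colourings `c` (by `v₂` colours) and `d` (by `v₃` colours) which are orthogonal: no two
edges agree in both colours (`isGenPacking_blocks_iff`).  As `K₅` has ten edges there are at most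
ten blocks, and explicit colourings attain `10` when `v₂ ≥ 5`, `v₃ ≥ 6`, and `9` when `v₂ = v₃ = 5`.

It remains to exclude ten blocks for `v₂ = v₃ = 5` (`no_orthogonal_colourings`).  A colour class is
a matching of `K₅`, so it has at most two edges; with five colours for ten edges every class has
exactly two, and so each colouring pairs the edges up into disjoint pairs (`exists_partner`).
This is a perfect matching of the Petersen graph, whose vertices are the edges of `K₅` and whose
edges are the disjoint pairs.  Orthogonality makes the two perfect matchings disjoint, and together
with the complementary perfect matching they would be a proper 3-edge-colouring of the
Petersen graph, which does not exist.
-/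

open Finset

/-! ### Orthogonal edge colourings of `K₅` -/

/-- The ten edges of `K₅`, in lexicographic order. -/
def edge : Fin 10 → Finset (Fin 5) :=
  ![{0, 1}, {0, 2}, {0, 3}, {0, 4}, {1, 2}, {1, 3}, {1, 4}, {2, 3}, {2, 4}, {3, 4}]

/-- Adjacency in the Petersen graph: the indices of the three edges of `K₅` disjoint from a
given one. -/
def petersenNbrs : Fin 10 → Finset (Fin 10) :=
  ![{7, 8, 9}, {5, 6, 9}, {4, 6, 8}, {4, 5, 7}, {2, 3, 9}, {1, 3, 8}, {1, 2, 7}, {0, 3, 6},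
    {0, 2, 5}, {0, 1, 4}]

theorem mem_petersenNbrs_iff :
    ∀ i j, j ∈ petersenNbrs i ↔ Disjoint (edge i) (edge j) := by
  decide +kernel

/-- A proper edge colouring of `K₅`: edges with a common vertex get different colours. -/
def ProperColouring {α : Type} (c : Fin 10 → α) : Prop :=
  ∀ i j, i ≠ j → ¬ Disjoint (edge i) (edge j) → c i ≠ c j

/-- `K₅` has no three pairwise disjoint edges, so a colour class has at most two edges. -/
theorem no_three_same_colour {α : Type} (c : Fin 10 → α) (h : ProperColouring c) (i j k : Fin 10)
    (hij : i ≠ j) (hik : i ≠ k) (hjk : j ≠ k) (h1 : c i = c j) (h2 : c i = c k) : False := by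
  have key : ∀ i j k : Fin 10, i ≠ j → i ≠ k → j ≠ k → Disjoint (edge i) (edge j) →
      Disjoint (edge i) (edge k) → Disjoint (edge j) (edge k) → False := by
    decide +kernel
  refine key i j k hij hik hjk ?_ ?_ ?_ <;> by_contra hd
  · exact h _ _ hij hd h1
  · exact h _ _ hik hd h2
  · exact h _ _ hjk hd (h1.symm.trans h2)

/-- With five colours every edge shares its colour with a disjoint one: otherwise the other nine
edges would use only four colours, and some colour would occur three times. -/
theorem exists_partner (c : Fin 10 → Fin 5) (h : ProperColouring c) (i : Fin 10) :
    ∃ j ∈ petersenNbrs i, c i = c j := by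
  by_contra! hn
  have hn' : ∀ j, i ≠ j → c j ≠ c i := by
    intro j hj he
    by_cases hd : Disjoint (edge i) (edge j)
    · exact hn j ((mem_petersenNbrs_iff i j).2 hd) he.symm
    · exact h i j hj hd he.symm
  obtain ⟨y, -, hlt⟩ := Finset.exists_lt_card_fiber_of_mul_lt_card_of_maps_to
    (s := Finset.univ.erase i) (t := Finset.univ.erase (c i)) (f := c) (n := 2)
    (by intro j hj; simp at hj ⊢; exact hn' j (Ne.symm hj)) (by simp)
  obtain ⟨a, ha, b, hb, k, hk, h1, h2, h3⟩ := Finset.two_lt_card.1 hlt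
  simp at ha hb hk
  exact no_three_same_colour c h a b k h1 h2 h3 (by rw [ha.2, hb.2]) (by rw [ha.2, hk.2])

theorem no_orthogonal_colourings (c d : Fin 10 → Fin 5) (hc : ProperColouring c)
    (hd : ProperColouring d) (ho : ∀ i j, i ≠ j → c i = c j → d i ≠ d j) : False := by
  have pc := exists_partner c hc
  have pd := exists_partner d hd
  have ac : ∀ i j, i < j → j ∉ petersenNbrs i → c i ≠ c j := fun i j hij h =>
    hc i j hij.ne (fun h' => h ((mem_petersenNbrs_iff i j).2 h'))
  have ad : ∀ i j, i < j → j ∉ petersenNbrs i → d i ≠ d j := fun i j hij h =>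
    hd i j hij.ne (fun h' => h ((mem_petersenNbrs_iff i j).2 h'))
  clear hc hd
  -- Written out over the ten edges, the hypotheses say that `c` and `d` select disjoint perfect
  -- matchings of the Petersen graph; a finite case analysis refutes this.
  simp [Fin.forall_fin_succ, petersenNbrs] at pc pd ac ad ho
  grind

/-! ### Packings as coloured edge families -/

theorem exists_eq_univ_map {α : Type} (P : Multiset α) :
    ∃ b : Fin P.card → α, P = Finset.univ.val.map b := by
  obtain ⟨l, rfl⟩ := Quot.exists_rep P
  refine ⟨l.get, ?_⟩
  have h : Finset.univ.val.map l.get = (l : Multiset α) := by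
    rw [Fin.univ_val_map, List.ofFn_get]
  exact h.symm

/-- For `λ = 1` the packing condition says that no two blocks with different indices both contain
the same admissible tuple. -/
theorem isGenPacking_map_iff {ι : Type} [Fintype ι] [DecidableEq ι] {n t : ℕ} {v k : ι → ℕ}
    (b : Fin n → ∀ i : ι, Finset (Fin (v i))) :
    IsGenPacking t 1 v k (Finset.univ.val.map b) ↔
      (∀ x i, (b x i).card = k i) ∧
      ∀ x y, x ≠ y → ∀ T : ∀ i : ι, Finset (Fin (v i)), (∀ i, (T i).card ≤ k i) →
        (∑ i, (T i).card) = t → (∀ i, T i ⊆ b x i) → (∀ i, T i ⊆ b y i) → False := by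
  classical
  have hcard : ∀ T : ∀ i : ι, Finset (Fin (v i)),
      (((Finset.univ : Finset (Fin n)).val.map b).filter (fun B => ∀ i, T i ⊆ B i)).card
        = ((Finset.univ : Finset (Fin n)).filter (fun x => ∀ i, T i ⊆ b x i)).card := by
    intro T
    rw [Multiset.filter_map, Multiset.card_map]
    rfl
  unfold IsGenPacking
  refine and_congr (by simp) ⟨fun h x y hxy T hT hs hx hy => ?_, fun h t' ht' hs T hT => ?_⟩
  · have := h (fun i => (T i).card) hT hs T (fun _ => rfl)
    rw [hcard, Finset.card_le_one] at this
    exact hxy (this x (by simpa using hx) y (by simpa using hy))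
  · rw [hcard, Finset.card_le_one]
    intro x hx y hy
    by_contra hxy
    simp only [Finset.mem_filter, Finset.mem_univ, true_and] at hx hy
    exact h x y hxy T (fun i => (hT i).trans_le (ht' i)) (by simpa [hT] using hs) hx hy

/-- The tuple of sets with components `s`, `x`, `y`. -/
def triple {v₂ v₃ : ℕ} (s : Finset (Fin 5)) (x : Finset (Fin v₂)) (y : Finset (Fin v₃)) :
    ∀ i : Fin 3, Finset (Fin (![5, v₂, v₃] i))
  | 0 => s
  | 1 => x
  | 2 => y

theorem triple_subset {v₂ v₃ : ℕ} {s s' : Finset (Fin 5)} {x x' : Finset (Fin v₂)}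
    {y y' : Finset (Fin v₃)} (hs : s ⊆ s') (hx : x ⊆ x') (hy : y ⊆ y') :
    ∀ i, triple s x y i ⊆ triple s' x' y' i
  | 0 => hs
  | 1 => hx
  | 2 => hy

/-- Blocks `(e x, {c x}, {d x})` form a packing exactly when the `e x` are distinct edges of `K₅`
on which `c` and `d` are proper orthogonal colourings. -/
theorem isGenPacking_blocks_iff {n v₂ v₃ : ℕ} (e : Fin n → Finset (Fin 5)) (c : Fin n → Fin v₂)
    (d : Fin n → Fin v₃) :
    IsGenPacking 2 1 ![5, v₂, v₃] ![2, 1, 1]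
        (Finset.univ.val.map fun x => triple (e x) {c x} {d x}) ↔
      (∀ x, (e x).card = 2) ∧ ∀ x y, x ≠ y → e x ≠ e y ∧
        (¬ Disjoint (e x) (e y) → c x ≠ c y) ∧ (¬ Disjoint (e x) (e y) → d x ≠ d y) ∧
        (c x = c y → d x ≠ d y) := by
  rw [isGenPacking_map_iff]
  constructor
  · rintro ⟨h1, h2⟩
    have he : ∀ x, (e x).card = 2 := fun x => h1 x 0
    refine ⟨he, fun x y hxy => ⟨fun h => ?_, fun h h' => ?_, fun h h' => ?_, fun h h' => ?_⟩⟩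
    · refine h2 x y hxy (triple (e x) ∅ ∅) ?_ ?_
        (triple_subset subset_rfl (Finset.empty_subset _) (Finset.empty_subset _))
        (triple_subset (by rw [h]) (Finset.empty_subset _) (Finset.empty_subset _)) <;>
        simp [Fin.forall_fin_succ, Fin.sum_univ_three, triple, he]
    · obtain ⟨a, ha, hb⟩ := Finset.not_disjoint_iff.1 h
      refine h2 x y hxy (triple {a} {c x} ∅) ?_ ?_
        (triple_subset (Finset.singleton_subset_iff.2 ha) subset_rfl (Finset.empty_subset _))
        (triple_subset (Finset.singleton_subset_iff.2 hb) (by rw [h']) (Finset.empty_subset _)) <;>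
        simp [Fin.forall_fin_succ, Fin.sum_univ_three, triple]
    · obtain ⟨a, ha, hb⟩ := Finset.not_disjoint_iff.1 h
      refine h2 x y hxy (triple {a} ∅ {d x}) ?_ ?_
        (triple_subset (Finset.singleton_subset_iff.2 ha) (Finset.empty_subset _) subset_rfl)
        (triple_subset (Finset.singleton_subset_iff.2 hb) (Finset.empty_subset _) (by rw [h'])) <;>
        simp [Fin.forall_fin_succ, Fin.sum_univ_three, triple]
    · refine h2 x y hxy (triple ∅ {c x} {d x}) ?_ ?_
        (triple_subset (Finset.empty_subset _) subset_rfl subset_rfl)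
        (triple_subset (Finset.empty_subset _) (by rw [h]) (by rw [h'])) <;>
        simp [Fin.forall_fin_succ, Fin.sum_univ_three, triple]
  · rintro ⟨he, h⟩
    refine ⟨fun x i => ?_, fun x y hxy T hT hs hx hy => ?_⟩
    · fin_cases i
      · exact he x
      · exact Finset.card_singleton _
      · exact Finset.card_singleton _
    obtain ⟨h0, h1, h2, h3⟩ := h x y hxy
    obtain ⟨S, hS⟩ : ∃ S : Finset (Fin 5), S = T 0 := ⟨_, rfl⟩
    obtain ⟨U, hU⟩ : ∃ U : Finset (Fin v₂), U = T 1 := ⟨_, rfl⟩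
    obtain ⟨V, hV⟩ : ∃ V : Finset (Fin v₃), V = T 2 := ⟨_, rfl⟩
    have hs' : S.card + U.card + V.card = 2 := by
      rw [Fin.sum_univ_three] at hs; rw [hS, hU, hV]; exact hs
    have hSx : S ⊆ e x := hS ▸ hx 0
    have hSy : S ⊆ e y := hS ▸ hy 0
    have hUx : U ⊆ {c x} := hU ▸ hx 1
    have hUy : U ⊆ {c y} := hU ▸ hy 1
    have hVx : V ⊆ {d x} := hV ▸ hx 2
    have hVy : V ⊆ {d y} := hV ▸ hy 2
    clear hS hU hV
    have hcU : U.Nonempty → c x = c y := fun ⟨a, ha⟩ =>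
      (Finset.mem_singleton.1 (hUx ha)).symm.trans (Finset.mem_singleton.1 (hUy ha))
    have hdV : V.Nonempty → d x = d y := fun ⟨a, ha⟩ =>
      (Finset.mem_singleton.1 (hVx ha)).symm.trans (Finset.mem_singleton.1 (hVy ha))
    have hdis : S.Nonempty → ¬ Disjoint (e x) (e y) := fun ⟨a, ha⟩ =>
      Finset.not_disjoint_iff.2 ⟨a, hSx ha, hSy ha⟩
    have hUc : U.card ≤ 1 := by simpa using Finset.card_le_card hUx
    have hVc : V.card ≤ 1 := by simpa using Finset.card_le_card hVx
    rcases U.eq_empty_or_nonempty with rfl | hUn <;> rcases V.eq_empty_or_nonempty with rfl | hVn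
    · simp at hs'
      exact h0 ((Finset.eq_of_subset_of_card_le hSx (by rw [he, hs'])).symm.trans
        (Finset.eq_of_subset_of_card_le hSy (by rw [he, hs'])))
    · simp at hs'
      exact h2 (hdis (Finset.card_pos.1 (by omega))) (hdV hVn)
    · simp at hs'
      exact h1 (hdis (Finset.card_pos.1 (by omega))) (hcU hUn)
    · exact h3 (hcU hUn) (hdV hVn)

/-- Every packing has the form considered in `isGenPacking_blocks_iff`. -/
theorem exists_blocks {v₂ v₃ n : ℕ} {P : Multiset (∀ i : Fin 3, Finset (Fin (![5, v₂, v₃] i)))}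
    (hP : IsGenPacking 2 1 ![5, v₂, v₃] ![2, 1, 1] P) (hn : P.card = n) :
    ∃ (e : Fin n → Finset (Fin 5)) (c : Fin n → Fin v₂) (d : Fin n → Fin v₃),
      (∀ x, (e x).card = 2) ∧ ∀ x y, x ≠ y → e x ≠ e y ∧
        (¬ Disjoint (e x) (e y) → c x ≠ c y) ∧ (¬ Disjoint (e x) (e y) → d x ≠ d y) ∧
        (c x = c y → d x ≠ d y) := by
  subst hn
  obtain ⟨b, hb⟩ := exists_eq_univ_map P
  have hcard : ∀ x i, (b x i).card = (![2, 1, 1] : Fin 3 → ℕ) i := fun x i =>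
    hP.1 (b x) (by rw [hb]; simp) i
  have hc' : ∀ x, ∃ a : Fin v₂, b x 1 = ({a} : Finset (Fin v₂)) := fun x =>
    Finset.card_eq_one.1 (hcard x 1)
  have hd' : ∀ x, ∃ a : Fin v₃, b x 2 = ({a} : Finset (Fin v₃)) := fun x =>
    Finset.card_eq_one.1 (hcard x 2)
  choose c hc using hc'
  choose d hd using hd'
  refine ⟨fun x => b x 0, c, d, (isGenPacking_blocks_iff (fun x => b x 0) c d).1 ?_⟩
  have : b = fun x => triple (b x 0) {c x} {d x} := by
    funext x i
    fin_cases i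
    · rfl
    · exact hc x
    · exact hd x
  rw [← this, ← hb]
  exact hP

/-! ### The packing number -/

theorem exists_edge_eq : ∀ s : Finset (Fin 5), s.card = 2 → ∃ i, edge i = s := by
  decide +kernel

theorem edge_injective : Function.Injective edge := by
  have : ∀ i j, edge i = edge j → i = j := by decide +kernel
  exact fun i j => this i j

theorem card_le_ten {v₂ v₃ : ℕ} {P : Multiset (∀ i : Fin 3, Finset (Fin (![5, v₂, v₃] i)))}
    (hP : IsGenPacking 2 1 ![5, v₂, v₃] ![2, 1, 1] P) : P.card ≤ 10 := by
  obtain ⟨e, c, d, he, h⟩ := exists_blocks hP rfl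
  choose f hf using fun x => exists_edge_eq (e x) (he x)
  have hinj : Function.Injective f := fun x y hxy => by
    by_contra hne
    exact (h x y hne).1 (by rw [← hf, ← hf, hxy])
  simpa using Fintype.card_le_of_injective f hinj

theorem card_ne_ten {P : Multiset (∀ i : Fin 3, Finset (Fin (![5, 5, 5] i)))}
    (hP : IsGenPacking 2 1 ![5, 5, 5] ![2, 1, 1] P) : P.card ≠ 10 := by
  intro h10
  obtain ⟨e, c, d, he, h⟩ := exists_blocks hP h10
  choose f hf using fun x => exists_edge_eq (e x) (he x)
  have hinj : Function.Injective f := fun x y hxy => by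
    by_contra hne
    exact (h x y hne).1 (by rw [← hf, ← hf, hxy])
  -- Ten distinct edges are all the edges of `K₅`; `g` finds the block that contains a given edge.
  obtain ⟨g, hg⟩ := (Finite.surjective_of_injective hinj).hasRightInverse
  have hge : ∀ i, e (g i) = edge i := fun i => by rw [← hf, hg]
  have hgi : ∀ i j, i ≠ j → g i ≠ g j := fun i j hij => hg.injective.ne hij
  refine no_orthogonal_colourings (c ∘ g) (d ∘ g) (fun i j hij hd => ?_) (fun i j hij hd => ?_)
    (fun i j hij => (h _ _ (hgi i j hij)).2.2.2)
  · exact (h _ _ (hgi i j hij)).2.1 (by rwa [hge, hge])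
  · exact (h _ _ (hgi i j hij)).2.2.1 (by rwa [hge, hge])

theorem exists_packing_nine :
    ∃ P, IsGenPacking 2 1 ![5, 5, 5] ![2, 1, 1] P ∧ Multiset.card P = 9 := by
  refine ⟨_, (isGenPacking_blocks_iff (n := 9) (fun x => edge x.castSucc)
    ![0, 1, 2, 3, 2, 1, 4, 3, 0] ![0, 1, 2, 3, 3, 4, 1, 0, 2]).2 ?_, by simp⟩
  decide +kernel

theorem exists_packing_ten {v₂ v₃ : ℕ} (h2 : 5 ≤ v₂) (h3 : 6 ≤ v₃) :
    ∃ P, IsGenPacking 2 1 ![5, v₂, v₃] ![2, 1, 1] P ∧ Multiset.card P = 10 := by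
  refine ⟨_, (isGenPacking_blocks_iff (n := 10) edge
    (fun x => Fin.castLE h2 ((![0, 1, 2, 3, 2, 3, 4, 4, 0, 1] : Fin 10 → Fin 5) x))
    (fun x => Fin.castLE h3 ((![0, 1, 2, 3, 3, 1, 2, 0, 4, 5] : Fin 10 → Fin 6) x))).2 ?_, by simp⟩
  simp only [ne_eq, (Fin.castLE_injective h2).eq_iff, (Fin.castLE_injective h3).eq_iff]
  decide +kernel

/-- for `𝐯 = (5,v₂,v₃)` with `5 ≤ v₂ ≤ v₃` and `𝐤 = (2,1,1)`,
the packing number is `9` when `𝐯 = (5,5,5)` and `10` otherwise. -/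
theorem stmt15 (v₂ v₃ : ℕ) (h2 : 5 ≤ v₂) (h23 : v₂ ≤ v₃) :
    genPackingNumber (Fin 3) 2 1 ![5, v₂, v₃] ![2, 1, 1] =
      if v₂ = 5 ∧ v₃ = 5 then 9 else 10 := by
  apply IsGreatest.csSup_eq
  split_ifs with h
  · obtain ⟨rfl, rfl⟩ := h
    refine ⟨exists_packing_nine, ?_⟩
    rintro N ⟨P, hP, rfl⟩
    have := card_le_ten hP
    have := card_ne_ten hP
    omega
  · refine ⟨exists_packing_ten h2 (by omega), ?_⟩
    rintro N ⟨P, hP, rfl⟩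
    exact card_le_ten hP
end
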